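/- For every r in (1,2) there is a constant C_r > 0 with the following property: for every δ > 0 there is a constant C_{r,δ} > 0 such that for every integer y ≥ 1, every integer N > exp(C_{r,δ} y^δ), every integer b with gcd(b,y) = 1, and every finitely supported f : ℤ → ℝ, one has ‖A_{N,y,b} f‖_{ℓ^{r'}} ≤ C_r (y/N)^{1/r − 1/r'} ‖f‖_{ℓ^r}, where r' = r/(r−1) is the conjugate exponent. -/

import Mathlib

open scoped ENNReal

noncomputable section

/-- The prime-progression average `A_{N,y,b} f`. -/
def pavg (N y : ℕ) (b : ℤ) (f : ℤ → ℝ) (x : ℤ) : ℝ :=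
  (Nat.totient y : ℝ) / (N : ℝ) *
    ∑ n ∈ (Finset.range N).filter (fun n : ℕ => (n : ℤ) % (y : ℤ) = b % (y : ℤ)),
      ArithmeticFunction.vonMangoldt n * f (x - n)

/-- The `ℓ^p(ℤ)` norm, valued in `ℝ≥0∞`. -/
def lpNorm (p : ℝ) (g : ℤ → ℝ) : ℝ≥0∞ :=
  (∑' x : ℤ, (‖g x‖₊ : ℝ≥0∞) ^ p) ^ (1 / p)

/-!
On `n < N`, `n ≡ b (mod y)`, the von Mangoldt function is at most a constant times `y / φ(y)` times
Selberg's majorant with sieve level a small power of `N`, except at the few prime powers which share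
a factor with a modulus of the sieve; those contribute little by Young's inequality.

The majorant is a combination of Ramanujan sums `c_q(n)` with coefficients `O(q ^ (ε - 1))`. On a
dyadic block `q ∼ D` two bounds for convolution with it are available. Since `|c_q(n)|` is at most
the sum of the common divisors of `q` and `n`, the divisor bound controls its `p`-th moment and
Young's inequality loses only `D ^ ε`. Since `c_q` has Fourier transform supported at the Farey
fractions of denominator `q`, its exponential sums gain `D ^ (ε - 1)`, which gives an `ℓ²` bound.
Interpolating between the two (large `p`), the gain survives for every `r ∈ (1, 2)` and the dyadic
blocks sum geometrically. All of this only needs `N` to exceed a power of `y` depending on `r`.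
-/

section BilinearForms

variable {ι κ : Type*}

/-- The `ℓ^s` norm of the restriction of `f` to the finite set `E`. -/
def windowNorm {V : Type*} [Norm V] (s : ℝ) (E : Finset ι) (f : ι → V) : ℝ :=
  (∑ a ∈ E, ‖f a‖ ^ s) ^ (1 / s)

section WindowNorm

variable {V W : Type*} [SeminormedAddCommGroup V] [SeminormedAddCommGroup W]

lemma sum_norm_rpow_nonneg (s : ℝ) (E : Finset ι) (f : ι → V) : 0 ≤ ∑ a ∈ E, ‖f a‖ ^ s :=
  Finset.sum_nonneg fun _ _ => Real.rpow_nonneg (norm_nonneg _) _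

lemma windowNorm_nonneg (s : ℝ) (E : Finset ι) (f : ι → V) : 0 ≤ windowNorm s E f :=
  Real.rpow_nonneg (sum_norm_rpow_nonneg s E f) _

lemma windowNorm_rpow {s : ℝ} (hs : s ≠ 0) (E : Finset ι) (f : ι → V) :
    windowNorm s E f ^ s = ∑ a ∈ E, ‖f a‖ ^ s := by
  rw [windowNorm, one_div, Real.rpow_inv_rpow (sum_norm_rpow_nonneg s E f) hs]

lemma windowNorm_congr {s : ℝ} {E : Finset ι} {f : ι → V} {g : ι → W}
    (h : ∀ a ∈ E, ‖f a‖ = ‖g a‖) : windowNorm s E f = windowNorm s E g := by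
  rw [windowNorm, windowNorm, Finset.sum_congr rfl fun a ha => by rw [h a ha]]

lemma windowNorm_smul {𝕜 : Type*} [NormedField 𝕜] [NormedSpace 𝕜 V] {s : ℝ} (hs : s ≠ 0) (c : 𝕜)
    (E : Finset ι) (f : ι → V) : windowNorm s E (c • f) = ‖c‖ * windowNorm s E f := by
  simp_rw [windowNorm, Pi.smul_apply, norm_smul, Real.mul_rpow (norm_nonneg _) (norm_nonneg _)]
  rw [← Finset.mul_sum, Real.mul_rpow (by positivity) (sum_norm_rpow_nonneg s E f), one_div,
    Real.rpow_rpow_inv (norm_nonneg c) hs]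

lemma norm_le_windowNorm {s : ℝ} (hs : 0 < s) {E : Finset ι} (f : ι → V) {a : ι} (ha : a ∈ E) :
    ‖f a‖ ≤ windowNorm s E f := by
  rw [← Real.rpow_le_rpow_iff (norm_nonneg _) (windowNorm_nonneg s E f) hs,
    windowNorm_rpow hs.ne']
  exact Finset.single_le_sum (f := fun a => ‖f a‖ ^ s)
    (fun _ _ => Real.rpow_nonneg (norm_nonneg _) _) ha

end WindowNorm

/-- The bilinear form with matrix `K`, restricted to the finite index sets `E` and `F`. -/
def bilinForm (K : ι → κ → ℂ) (E : Finset ι) (F : Finset κ) (f : ι → ℂ) (g : κ → ℂ) : ℂ :=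
  ∑ a ∈ E, ∑ x ∈ F, K a x * f a * g x

section BilinForm

variable {K : ι → κ → ℂ} {E : Finset ι} {F : Finset κ}

lemma norm_bilinForm_le_sum (f : ι → ℂ) (g : κ → ℂ) :
    ‖bilinForm K E F f g‖ ≤ ∑ a ∈ E, ∑ x ∈ F, ‖K a x‖ * ‖f a‖ * ‖g x‖ :=
  (norm_sum_le _ _).trans <| Finset.sum_le_sum fun a _ => (norm_sum_le _ _).trans_eq <|
    Finset.sum_congr rfl fun x _ => by rw [norm_mul, norm_mul]

lemma bilinForm_smul_smul (c d : ℂ) (f : ι → ℂ) (g : κ → ℂ) :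
    bilinForm K E F (c • f) (d • g) = c * d * bilinForm K E F f g := by
  simp_rw [bilinForm, Finset.mul_sum, Pi.smul_apply, smul_eq_mul]
  exact Finset.sum_congr rfl fun a _ => Finset.sum_congr rfl fun x _ => by ring

lemma bilinForm_eq_zero_of_windowNorm_eq_zero {s : ℝ} (hs : 0 < s) {f : ι → ℂ} {g : κ → ℂ}
    (h : windowNorm s E f = 0 ∨ windowNorm s F g = 0) : bilinForm K E F f g = 0 := by
  refine Finset.sum_eq_zero fun a ha => Finset.sum_eq_zero fun x hx => ?_
  rcases h with h | h
  · rw [norm_le_zero_iff.1 ((norm_le_windowNorm hs f ha).trans_eq h), mul_zero, zero_mul]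
  · rw [norm_le_zero_iff.1 ((norm_le_windowNorm hs g hx).trans_eq h), mul_zero]

lemma norm_bilinForm_le_of_unit {s A : ℝ} (hs : 0 < s)
    (h : ∀ f g, windowNorm s E f = 1 → windowNorm s F g = 1 → ‖bilinForm K E F f g‖ ≤ A)
    (f : ι → ℂ) (g : κ → ℂ) :
    ‖bilinForm K E F f g‖ ≤ A * windowNorm s E f * windowNorm s F g := by
  set a := windowNorm s E f with ha
  set c := windowNorm s F g with hc
  by_cases h0 : a = 0 ∨ c = 0
  · rw [bilinForm_eq_zero_of_windowNorm_eq_zero hs h0]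
    rcases h0 with h0 | h0 <;> simp [h0]
  push Not at h0
  have unit : ∀ {b : ℝ}, 0 ≤ b → b ≠ 0 → ‖((b⁻¹ : ℝ) : ℂ)‖ * b = 1 := fun hb hb' => by
    rw [Complex.norm_of_nonneg (inv_nonneg.2 hb), inv_mul_cancel₀ hb']
  have key := h (((a⁻¹ : ℝ) : ℂ) • f) (((c⁻¹ : ℝ) : ℂ) • g)
    (by rw [windowNorm_smul hs.ne', ← ha, unit (windowNorm_nonneg s E f) h0.1])
    (by rw [windowNorm_smul hs.ne', ← hc, unit (windowNorm_nonneg s F g) h0.2])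
  have ha0 : 0 < a := (windowNorm_nonneg s E f).lt_of_ne' h0.1
  have hc0 : 0 < c := (windowNorm_nonneg s F g).lt_of_ne' h0.2
  rw [bilinForm_smul_smul, norm_mul, norm_mul, Complex.norm_of_nonneg (by positivity),
    Complex.norm_of_nonneg (by positivity), ← mul_inv, inv_mul_le_iff₀ (by positivity)] at key
  linarith

end BilinForm

/-- The complex number with the argument of `z` whose modulus is `‖z‖ ^ w.re`: the analytic family
of the Riesz–Thorin argument. It vanishes at `z = 0`. -/
def phasePow (w z : ℂ) : ℂ := (‖z‖ : ℂ) ^ w * (z / ‖z‖)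

lemma norm_phasePow {w : ℂ} (hw : 0 < w.re) (z : ℂ) : ‖phasePow w z‖ = ‖z‖ ^ w.re := by
  rcases eq_or_ne z 0 with rfl | hz
  · simp [phasePow, hw.ne']
  · rw [phasePow, norm_mul, Complex.norm_cpow_eq_rpow_re_of_nonneg (norm_nonneg z) hw.ne', norm_div,
      Complex.norm_real, norm_norm, div_self (norm_ne_zero_iff.2 hz), mul_one]

lemma phasePow_one (z : ℂ) : phasePow 1 z = z := by
  rcases eq_or_ne z 0 with rfl | hz
  · simp [phasePow]
  · rw [phasePow, Complex.cpow_one,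
      mul_div_cancel₀ _ (Complex.ofReal_ne_zero.2 (norm_ne_zero_iff.2 hz))]

lemma differentiableAt_phasePow {w : ℂ} (hw : w ≠ 0) (z : ℂ) :
    DifferentiableAt ℂ (fun w => phasePow w z) w :=
  (differentiableAt_id.const_cpow (Or.inr hw)).mul_const _

lemma windowNorm_phasePow {w : ℂ} {q r : ℝ} (hw : 0 < w.re) (hwq : w.re * q = r) (hr : r ≠ 0)
    {E : Finset ι} {f : ι → ℂ} (hf : windowNorm r E f = 1) :
    windowNorm q E (fun a => phasePow w (f a)) = 1 := by
  simp_rw [windowNorm, norm_phasePow hw, ← Real.rpow_mul (norm_nonneg _), hwq]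
  rw [← windowNorm_rpow hr, hf, Real.one_rpow, Real.one_rpow]

section RieszThorin

variable {K : ι → κ → ℂ} {E : Finset ι} {F : Finset κ} {r : ℝ} {f : ι → ℂ} {g : κ → ℂ}

lemma differentiableAt_bilinForm_phasePow (f : ι → ℂ) (g : κ → ℂ) {w : ℂ} (hw : w ≠ 0) :
    DifferentiableAt ℂ
      (fun w => bilinForm K E F (fun a => phasePow w (f a)) (fun x => phasePow w (g x))) w :=
  .fun_sum fun _ _ => .fun_sum fun _ _ =>
    ((differentiableAt_phasePow hw _).const_mul _).mul (differentiableAt_phasePow hw _)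

lemma norm_bilinForm_phasePow_le_sum (hr : 0 < r) (hf : windowNorm r E f = 1)
    (hg : windowNorm r F g = 1) {w : ℂ} (hw : 0 < w.re) :
    ‖bilinForm K E F (fun a => phasePow w (f a)) (fun x => phasePow w (g x))‖ ≤
      ∑ a ∈ E, ∑ x ∈ F, ‖K a x‖ * 1 * 1 := by
  refine (norm_bilinForm_le_sum _ _).trans ?_
  gcongr with a ha x hx <;> rw [norm_phasePow hw]
  · exact Real.rpow_le_one (norm_nonneg _) ((norm_le_windowNorm hr f ha).trans_eq hf) hw.le
  · exact Real.rpow_le_one (norm_nonneg _) ((norm_le_windowNorm hr g hx).trans_eq hg) hw.le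

lemma norm_bilinForm_phasePow_le {s A : ℝ} (hr : 0 < r) (hf : windowNorm r E f = 1)
    (hg : windowNorm r F g = 1) {w : ℂ} (hw : 0 < w.re) (hws : w.re * s = r)
    (h : ∀ f g, ‖bilinForm K E F f g‖ ≤ A * windowNorm s E f * windowNorm s F g) :
    ‖bilinForm K E F (fun a => phasePow w (f a)) (fun x => phasePow w (g x))‖ ≤ A := by
  refine (h _ _).trans_eq ?_
  rw [windowNorm_phasePow hw hws hr.ne' hf, windowNorm_phasePow hw hws hr.ne' hg, mul_one, mul_one]

open Complex.HadamardThreeLines in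
theorem norm_bilinForm_le_interp {s₀ s₁ t A B : ℝ} (hs₀ : 0 < s₀) (hs₁ : 0 < s₁) (hr : 0 < r)
    (ht0 : 0 ≤ t) (ht1 : t ≤ 1) (hrt : 1 / r = (1 - t) / s₀ + t / s₁)
    (h₀ : ∀ f g, ‖bilinForm K E F f g‖ ≤ A * windowNorm s₀ E f * windowNorm s₀ F g)
    (h₁ : ∀ f g, ‖bilinForm K E F f g‖ ≤ B * windowNorm s₁ E f * windowNorm s₁ F g)
    (f : ι → ℂ) (g : κ → ℂ) :
    ‖bilinForm K E F f g‖ ≤ A ^ (1 - t) * B ^ t * windowNorm r E f * windowNorm r F g := by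
  refine norm_bilinForm_le_of_unit hr (fun f g hf hg => ?_) f g
  let e : ℂ → ℂ := fun z => (r / s₀ : ℝ) * (1 - z) + (r / s₁ : ℝ) * z
  have e_re : ∀ z, (e z).re = r / s₀ * (1 - z.re) + r / s₁ * z.re := fun z => by
    simp only [e, Complex.add_re, Complex.re_ofReal_mul, Complex.sub_re, Complex.one_re]
  have e_pos : ∀ z ∈ verticalClosedStrip 0 1, 0 < (e z).re := fun z hz => by
    rw [e_re]
    exact (convex_Ioi (0 : ℝ)) (Set.mem_Ioi.2 (div_pos hr hs₀)) (Set.mem_Ioi.2 (div_pos hr hs₁))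
      (sub_nonneg.2 hz.2) hz.1 (by ring) |>.trans_eq (by simp only [smul_eq_mul]; ring)
  have e_t : e t = 1 := by
    have : r / s₀ * (1 - t) + r / s₁ * t = r * (1 / r) := by rw [hrt]; ring
    rw [mul_one_div_cancel hr.ne'] at this
    simp only [e]
    exact_mod_cast this
  let Φ : ℂ → ℂ := fun z =>
    bilinForm K E F (fun a => phasePow (e z) (f a)) (fun x => phasePow (e z) (g x))
  have diffCont : DiffContOnCl ℂ Φ (verticalStrip 0 1) := by
    refine DifferentiableOn.diffContOnCl fun z hz => ?_
    rw [verticalStrip, Complex.closure_preimage_re, closure_Ioo zero_ne_one] at hz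
    have e_ne : e z ≠ 0 := fun h => (e_pos z hz).ne' (by rw [h, Complex.zero_re])
    have e_diff : DifferentiableAt ℂ e z := by fun_prop
    exact ((differentiableAt_bilinForm_phasePow f g e_ne).comp z e_diff).differentiableWithinAt
  have bdd : BddAbove ((norm ∘ Φ) '' verticalClosedStrip 0 1) :=
    ⟨_, Set.forall_mem_image.2 fun z hz => norm_bilinForm_phasePow_le_sum hr hf hg (e_pos z hz)⟩
  have key := norm_le_interp_of_mem_verticalClosedStrip₀₁' Φ (z := t) (a := A) (b := B)
    ⟨ht0, ht1⟩ diffCont bdd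
    (fun z (hz : z.re = 0) => norm_bilinForm_phasePow_le hr hf hg
      (e_pos z ⟨hz.ge, by linarith⟩) (by rw [e_re, hz]; field_simp; ring) h₀)
    (fun z (hz : z.re = 1) => norm_bilinForm_phasePow_le hr hf hg
      (e_pos z ⟨by linarith, hz.le⟩) (by rw [e_re, hz]; field_simp; ring) h₁)
  simpa only [Φ, e_t, phasePow_one, Complex.ofReal_re] using key

end RieszThorin

end BilinearForms

section Young

lemma young_pointwise {p s k u v : ℝ} (hp : 1 ≤ p) (hps : 1 / s = 1 - 1 / (2 * p))
    (hk : 0 ≤ k) (hu : 0 ≤ u) (hv : 0 ≤ v) :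
    k * u * v ≤ (1 - 1 / p) * (u ^ s * v ^ s) + 1 / (2 * p) * (k ^ p * u ^ s)
      + 1 / (2 * p) * (k ^ p * v ^ s) := by
  have hp0 : 0 < p := by linarith
  have hp1 : 1 / p ≤ 1 := (div_le_one hp0).2 hp
  have half : 1 / (2 * p) = 1 / p / 2 := by field_simp
  have hs0 : s ≠ 0 := by
    rintro rfl
    rw [div_zero, half] at hps
    linarith
  have k_split : (k ^ p) ^ (1 / (2 * p)) * (k ^ p) ^ (1 / (2 * p)) = k := by
    rw [← Real.rpow_mul hk, ← Real.rpow_add_of_nonneg hk (by positivity) (by positivity)]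
    rw [show p * (1 / (2 * p)) + p * (1 / (2 * p)) = 1 by field_simp; norm_num, Real.rpow_one]
  have split {w : ℝ} (hw : 0 ≤ w) : (w ^ s) ^ (1 - 1 / p) * (w ^ s) ^ (1 / (2 * p)) = w := by
    rw [← Real.rpow_add_of_nonneg (by positivity) (by linarith) (by positivity),
      show 1 - 1 / p + 1 / (2 * p) = 1 / s by rw [hps, half]; ring, one_div,
      Real.rpow_rpow_inv hw hs0]
  calc k * u * v
      = (u ^ s * v ^ s) ^ (1 - 1 / p) * (k ^ p * u ^ s) ^ (1 / (2 * p)) *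
          (k ^ p * v ^ s) ^ (1 / (2 * p)) := by
        rw [Real.mul_rpow (by positivity) (by positivity),
          Real.mul_rpow (by positivity) (by positivity),
          Real.mul_rpow (by positivity) (by positivity)]
        nth_rewrite 1 [← k_split, ← split hu, ← split hv]
        ring
    _ ≤ _ := Real.geom_mean_le_arith_mean3_weighted (by linarith) (by positivity) (by positivity)
        (by positivity) (by positivity) (by positivity) (by rw [half]; ring)

variable {ι κ : Type*} {K : ι → κ → ℂ} {E : Finset ι} {F : Finset κ} {p s A : ℝ}

lemma sum_sum_mul_mul_le_one {k : ι → κ → ℝ} {u : ι → ℝ} {v : κ → ℝ} (hp : 1 ≤ p)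
    (hps : 1 / s = 1 - 1 / (2 * p)) (hk : ∀ a x, 0 ≤ k a x) (hu : ∀ a, 0 ≤ u a)
    (hv : ∀ x, 0 ≤ v x) (row : ∀ a ∈ E, ∑ x ∈ F, k a x ^ p ≤ 1)
    (col : ∀ x ∈ F, ∑ a ∈ E, k a x ^ p ≤ 1) (hus : ∑ a ∈ E, u a ^ s = 1)
    (hvs : ∑ x ∈ F, v x ^ s = 1) :
    ∑ a ∈ E, ∑ x ∈ F, k a x * u a * v x ≤ 1 := by
  have : 0 < p := by linarith
  calc ∑ a ∈ E, ∑ x ∈ F, k a x * u a * v x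
      ≤ ∑ a ∈ E, ∑ x ∈ F, ((1 - 1 / p) * (u a ^ s * v x ^ s)
        + 1 / (2 * p) * (k a x ^ p * u a ^ s) + 1 / (2 * p) * (k a x ^ p * v x ^ s)) := by
        gcongr with a _ x _
        exact young_pointwise hp hps (hk a x) (hu a) (hv x)
    _ = (1 - 1 / p) * ((∑ a ∈ E, u a ^ s) * ∑ x ∈ F, v x ^ s)
        + 1 / (2 * p) * (∑ a ∈ E, (∑ x ∈ F, k a x ^ p) * u a ^ s)
        + 1 / (2 * p) * (∑ x ∈ F, (∑ a ∈ E, k a x ^ p) * v x ^ s) := by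
        simp_rw [Finset.sum_add_distrib, ← Finset.mul_sum, Finset.sum_mul_sum, Finset.sum_mul]
        rw [Finset.sum_comm (f := fun a x => k a x ^ p * v x ^ s)]
        simp_rw [← Finset.mul_sum]
    _ ≤ (1 - 1 / p) * (1 * 1) + 1 / (2 * p) * (∑ a ∈ E, 1 * u a ^ s)
        + 1 / (2 * p) * (∑ x ∈ F, 1 * v x ^ s) := by
        rw [hus, hvs]
        gcongr with a ha x hx
        · exact Real.rpow_nonneg (hu a) s
        · exact row a ha
        · exact Real.rpow_nonneg (hv x) s
        · exact col x hx
    _ = 1 := by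
        simp_rw [one_mul, hus, hvs]
        field_simp
        ring

lemma sum_norm_div_rpow_le_one (hA : 0 < A) {k : ι → ℂ} (h : ∑ n ∈ E, ‖k n‖ ^ p ≤ A ^ p) :
    ∑ n ∈ E, (‖k n‖ / A) ^ p ≤ 1 := by
  simp_rw [Real.div_rpow (norm_nonneg _) hA.le, ← Finset.sum_div]
  exact (div_le_one (Real.rpow_pos_of_pos hA p)).2 h

theorem norm_bilinForm_le_young (hp : 1 ≤ p) (hs : 0 < s) (hps : 1 / s = 1 - 1 / (2 * p))
    (hA : 0 < A) (row : ∀ a ∈ E, ∑ x ∈ F, ‖K a x‖ ^ p ≤ A ^ p)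
    (col : ∀ x ∈ F, ∑ a ∈ E, ‖K a x‖ ^ p ≤ A ^ p) (f : ι → ℂ) (g : κ → ℂ) :
    ‖bilinForm K E F f g‖ ≤ A * windowNorm s E f * windowNorm s F g := by
  refine norm_bilinForm_le_of_unit hs (fun f g hf hg => (norm_bilinForm_le_sum f g).trans ?_) f g
  have key := sum_sum_mul_mul_le_one (k := fun a x => ‖K a x‖ / A) (u := fun a => ‖f a‖)
    (v := fun x => ‖g x‖) hp hps (fun _ _ => by positivity) (fun _ => norm_nonneg _)
    (fun _ => norm_nonneg _) (fun a ha => sum_norm_div_rpow_le_one hA (row a ha))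
    (fun x hx => sum_norm_div_rpow_le_one hA (col x hx))
    (by rw [← windowNorm_rpow hs.ne', hf, Real.one_rpow])
    (by rw [← windowNorm_rpow hs.ne', hg, Real.one_rpow])
  calc ∑ a ∈ E, ∑ x ∈ F, ‖K a x‖ * ‖f a‖ * ‖g x‖
      = (∑ a ∈ E, ∑ x ∈ F, ‖K a x‖ / A * ‖f a‖ * ‖g x‖) * A := by
        simp_rw [Finset.sum_mul]
        refine Finset.sum_congr rfl fun a _ => Finset.sum_congr rfl fun x _ => ?_
        field_simp
    _ ≤ A := mul_le_of_le_one_left hA.le key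

end Young

section ConvolutionBound

/-- Convolution with `k` maps `ℓ^s` to the dual exponent `ℓ^(s/(s-1))` with norm at most `A`, stated
through the associated bilinear form on arbitrary finite windows. -/
def ConvolutionBound {G : Type*} [AddGroup G] (k : G → ℂ) (s A : ℝ) : Prop :=
  ∀ (E F : Finset G) (f g : G → ℂ),
    ‖bilinForm (fun a x => k (x - a)) E F f g‖ ≤ A * windowNorm s E f * windowNorm s F g

namespace ConvolutionBound

section AddGroup

variable {G : Type*} [AddGroup G] {k k' : G → ℂ} {s A A' : ℝ}

lemma mono {w : G → ℝ} (h : ConvolutionBound (fun m => (w m : ℂ)) s A)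
    (hk : ∀ m, ‖k m‖ ≤ w m) : ConvolutionBound k s A := by
  intro E F f g
  have abs_form : bilinForm (fun a x => (w (x - a) : ℂ)) E F (fun a => (‖f a‖ : ℂ))
      (fun x => (‖g x‖ : ℂ)) = ((∑ a ∈ E, ∑ x ∈ F, w (x - a) * ‖f a‖ * ‖g x‖ : ℝ) : ℂ) := by
    rw [bilinForm]
    push_cast
    rfl
  have norm_ofReal_norm (z : ℂ) : ‖(‖z‖ : ℂ)‖ = ‖z‖ := by simp
  calc ‖bilinForm (fun a x => k (x - a)) E F f g‖
      ≤ ∑ a ∈ E, ∑ x ∈ F, w (x - a) * ‖f a‖ * ‖g x‖ :=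
        (norm_bilinForm_le_sum f g).trans <| by gcongr; exact hk _
    _ ≤ ‖bilinForm (fun a x => (w (x - a) : ℂ)) E F (fun a => (‖f a‖ : ℂ))
          (fun x => (‖g x‖ : ℂ))‖ := by
        rw [abs_form, Complex.norm_real]
        exact le_abs_self _
    _ ≤ A * windowNorm s E (fun a => (‖f a‖ : ℂ)) * windowNorm s F (fun x => (‖g x‖ : ℂ)) :=
        h E F _ _
    _ = A * windowNorm s E f * windowNorm s F g := by
        rw [windowNorm_congr fun a _ => norm_ofReal_norm (f a),
          windowNorm_congr fun x _ => norm_ofReal_norm (g x)]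

lemma mono_right (h : ConvolutionBound k s A) (hA : A ≤ A') : ConvolutionBound k s A' :=
  fun E F f g => (h E F f g).trans <| by
    have := windowNorm_nonneg s E f
    have := windowNorm_nonneg s F g
    gcongr

lemma zero : ConvolutionBound (0 : G → ℂ) s 0 := fun E F f g => by
  simp [bilinForm]

lemma add (h : ConvolutionBound k s A) (h' : ConvolutionBound k' s A') :
    ConvolutionBound (k + k') s (A + A') := by
  intro E F f g
  have split : bilinForm (fun a x => (k + k') (x - a)) E F f g =
      bilinForm (fun a x => k (x - a)) E F f g + bilinForm (fun a x => k' (x - a)) E F f g := by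
    simp_rw [bilinForm, Pi.add_apply, add_mul, Finset.sum_add_distrib]
  rw [split, add_mul, add_mul]
  exact norm_add_le_of_le (h E F f g) (h' E F f g)

lemma const_smul {c : ℝ} (hc : 0 ≤ c) (h : ConvolutionBound k s A) :
    ConvolutionBound (c • k) s (c * A) := by
  intro E F f g
  have split : bilinForm (fun a x => (c • k) (x - a)) E F f g =
      c * bilinForm (fun a x => k (x - a)) E F f g := by
    simp_rw [bilinForm, Pi.smul_apply, Complex.real_smul, mul_assoc, Finset.mul_sum]
  rw [split, norm_mul, Complex.norm_of_nonneg hc, mul_assoc, mul_assoc, ← mul_assoc A]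
  exact mul_le_mul_of_nonneg_left (h E F f g) hc

lemma sum {τ : Type*} (T : Finset τ) {k : τ → G → ℂ} {A : τ → ℝ}
    (h : ∀ i ∈ T, ConvolutionBound (k i) s (A i)) :
    ConvolutionBound (∑ i ∈ T, k i) s (∑ i ∈ T, A i) := by
  classical
  induction T using Finset.induction_on with
  | empty => exact zero
  | insert i T hi ih =>
    rw [Finset.sum_insert hi, Finset.sum_insert hi]
    exact (h i (Finset.mem_insert_self i T)).add
      (ih fun j hj => h j (Finset.mem_insert_of_mem hj))

lemma interp {s₀ s₁ r t B : ℝ} (hs₀ : 0 < s₀) (hs₁ : 0 < s₁) (hr : 0 < r) (ht0 : 0 ≤ t)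
    (ht1 : t ≤ 1) (hrt : 1 / r = (1 - t) / s₀ + t / s₁) (h₀ : ConvolutionBound k s₀ A)
    (h₁ : ConvolutionBound k s₁ B) : ConvolutionBound k r (A ^ (1 - t) * B ^ t) :=
  fun E F => norm_bilinForm_le_interp hs₀ hs₁ hr ht0 ht1 hrt (h₀ E F) (h₁ E F)

theorem young {p : ℝ} (hp : 1 ≤ p) (hs : 0 < s) (hps : 1 / s = 1 - 1 / (2 * p))
    (hA : 0 < A) (hk : ∀ T : Finset G, ∑ n ∈ T, ‖k n‖ ^ p ≤ A ^ p) : ConvolutionBound k s A := by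
  classical
  intro E F
  refine norm_bilinForm_le_young hp hs hps hA (fun a _ => ?_) (fun x _ => ?_)
  · rw [← Finset.sum_image (f := fun m => ‖k m‖ ^ p) (g := fun x => x - a)
      (sub_left_injective.injOn)]
    exact hk _
  · rw [← Finset.sum_image (f := fun m => ‖k m‖ ^ p) (g := fun a => x - a)
      (sub_right_injective.injOn)]
    exact hk _

end AddGroup

section Fourier

open AddCircle MeasureTheory

variable {k : ℤ → ℂ} {S E : Finset ℤ} {B : ℝ}

lemma norm_sum_smul_fourierLp (E : Finset ℤ) (f : ℤ → ℂ) :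
    ‖∑ a ∈ E, f a • fourierLp (T := 1) 2 a‖ = windowNorm 2 E f := by
  have sq : ‖∑ a ∈ E, f a • fourierLp (T := 1) 2 a‖ ^ 2 = ∑ a ∈ E, ‖f a‖ ^ 2 := by
    have := inner_self_eq_norm_sq_to_K (𝕜 := ℂ) (∑ a ∈ E, f a • fourierLp (T := 1) 2 a)
    rw [orthonormal_fourier.inner_sum] at this
    simp only [Complex.conj_mul'] at this
    apply Complex.ofReal_injective
    push_cast
    exact this.symm
  rw [windowNorm, ← Real.sqrt_eq_rpow, ← Real.sqrt_sq (norm_nonneg (∑ a ∈ E, _))]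
  rw [sq]
  simp only [Real.rpow_ofNat]

lemma norm_sum_sum_smul_fourierLp_le
    (hk : ∀ u : ℂ, ‖u‖ = 1 → ‖∑ n ∈ S, k n * u ^ n‖ ≤ B) (E : Finset ℤ) (f : ℤ → ℂ) :
    ‖∑ n ∈ S, ∑ a ∈ E, (k n * f a) • fourierLp (T := 1) 2 (n + a)‖ ≤ B * windowNorm 2 E f := by
  let toL2 := ContinuousMap.toLp (E := ℂ) 2 (haarAddCircle (T := 1)) ℂ
  let U : C(AddCircle (1 : ℝ), ℂ) := ∑ a ∈ E, f a • fourier a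
  let V : C(AddCircle (1 : ℝ), ℂ) := ∑ n ∈ S, ∑ a ∈ E, (k n * f a) • fourier (n + a)
  have toL2_U : toL2 U = ∑ a ∈ E, f a • fourierLp (T := 1) 2 a := by
    simp only [U, map_sum, map_smul]; rfl
  have toL2_V : toL2 V = ∑ n ∈ S, ∑ a ∈ E, (k n * f a) • fourierLp (T := 1) 2 (n + a) := by
    simp only [V, map_sum, map_smul]; rfl
  have V_eq (θ : AddCircle (1 : ℝ)) : V θ = (∑ n ∈ S, k n * (toCircle θ : ℂ) ^ n) * U θ := by
    simp only [U, V, ContinuousMap.sum_apply, ContinuousMap.smul_apply, smul_eq_mul, fourier_apply,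
      toCircle_zsmul, zpow_add, Circle.coe_mul, Circle.coe_zpow, Finset.sum_mul_sum]
    exact Finset.sum_congr rfl fun n _ => Finset.sum_congr rfl fun a _ => by ring
  rw [← norm_sum_smul_fourierLp, ← toL2_U, ← toL2_V]
  refine Lp.norm_le_mul_norm_of_ae_le_mul ?_
  filter_upwards [ContinuousMap.coeFn_toLp (p := 2) (𝕜 := ℂ) haarAddCircle U,
    ContinuousMap.coeFn_toLp (p := 2) (𝕜 := ℂ) haarAddCircle V] with θ hU hV
  rw [hU, hV, V_eq, norm_mul]
  gcongr
  exact hk _ (Circle.norm_coe _)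

lemma bilinForm_eq_inner_fourierLp (hS : ∀ n, n ∉ S → k n = 0) (E F : Finset ℤ) (f g : ℤ → ℂ) :
    bilinForm (fun a x => k (x - a)) E F f g =
      inner ℂ (∑ x ∈ F, starRingEnd ℂ (g x) • fourierLp (T := 1) 2 x)
        (∑ n ∈ S, ∑ a ∈ E, (k n * f a) • fourierLp (T := 1) 2 (n + a)) := by
  have coeff (a x : ℤ) : k (x - a) =
      ∑ n ∈ S, k n * inner ℂ (fourierLp (T := 1) 2 x) (fourierLp (T := 1) 2 (n + a)) := by
    simp_rw [orthonormal_iff_ite.1 orthonormal_fourier, ← sub_eq_iff_eq_add, mul_ite, mul_one,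
      mul_zero, Finset.sum_ite_eq]
    split_ifs with h
    · rfl
    · exact hS _ h
  simp_rw [bilinForm, coeff, sum_inner, inner_sum, inner_smul_left, inner_smul_right,
    Complex.conj_conj, Finset.sum_mul]
  rw [Finset.sum_comm]
  refine Finset.sum_congr rfl fun x _ => ?_
  rw [Finset.sum_comm]
  exact Finset.sum_congr rfl fun n _ => Finset.sum_congr rfl fun a _ => by ring

theorem of_norm_sum_mul_zpow_le (hS : ∀ n, n ∉ S → k n = 0)
    (hk : ∀ u : ℂ, ‖u‖ = 1 → ‖∑ n ∈ S, k n * u ^ n‖ ≤ B) : ConvolutionBound k 2 B := by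
  intro E F f g
  have conj_norm : windowNorm 2 F (fun x => starRingEnd ℂ (g x)) = windowNorm 2 F g :=
    windowNorm_congr fun x _ => Complex.norm_conj (g x)
  rw [bilinForm_eq_inner_fourierLp hS, ← conj_norm, ← norm_sum_smul_fourierLp F, mul_comm]
  exact (norm_inner_le_norm _ _).trans <|
    mul_le_mul_of_nonneg_left (norm_sum_sum_smul_fourierLp_le hk E f) (norm_nonneg _)

end Fourier

end ConvolutionBound

end ConvolutionBound

section FinsetKernel

/-- The function on `ℤ` equal to `F` on the finite set `W` of natural numbers and to zero elsewhere.
As a linear map in `F`, so that decompositions of a weight pass to its kernel. -/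
def finsetKernel (W : Finset ℕ) : (ℕ → ℝ) →ₗ[ℝ] (ℤ → ℂ) where
  toFun F m := ∑ n ∈ W, if (n : ℤ) = m then (F n : ℂ) else 0
  map_add' F F' := by
    ext m
    simp only [Pi.add_apply, ← Finset.sum_add_distrib]
    refine Finset.sum_congr rfl fun n _ => ?_
    split_ifs <;> simp
  map_smul' c F := by
    ext m
    simp only [Pi.smul_apply, RingHom.id_apply, Finset.smul_sum]
    refine Finset.sum_congr rfl fun n _ => ?_
    split_ifs <;> simp

variable {W : Finset ℕ} {F F' : ℕ → ℝ} {r D : ℝ}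

lemma finsetKernel_apply (W : Finset ℕ) (F : ℕ → ℝ) (m : ℤ) :
    finsetKernel W F m = ∑ n ∈ W, if (n : ℤ) = m then (F n : ℂ) else 0 := rfl

lemma finsetKernel_natCast (F : ℕ → ℝ) {n : ℕ} (hn : n ∈ W) : finsetKernel W F n = F n := by
  simp [finsetKernel_apply, hn]

lemma finsetKernel_eq_zero (F : ℕ → ℝ) {m : ℤ} (hm : m ∉ W.map Nat.castEmbedding) :
    finsetKernel W F m = 0 :=
  Finset.sum_eq_zero fun n hn => if_neg fun h => hm (Finset.mem_map.2 ⟨n, hn, h⟩)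

lemma finsetKernel_indicator {S W : Finset ℕ} (hSW : S ⊆ W) (F : ℕ → ℝ) :
    finsetKernel W (Set.indicator S F) = finsetKernel S F := by
  ext m
  simp_rw [finsetKernel_apply]
  rw [← Finset.sum_subset hSW]
  · exact Finset.sum_congr rfl fun n hn => by rw [Set.indicator_of_mem (Finset.mem_coe.2 hn)]
  · intro n _ hn
    rw [Set.indicator_of_notMem (by exact_mod_cast hn), Complex.ofReal_zero, ite_self]

lemma sum_finsetKernel_mul {E : Finset ℤ} {x : ℤ} (hE : ∀ n ∈ W, x - n ∈ E) (f : ℤ → ℂ) :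
    ∑ a ∈ E, finsetKernel W F (x - a) * f a = ∑ n ∈ W, F n * f (x - n) := by
  simp_rw [finsetKernel_apply, Finset.sum_mul]
  rw [Finset.sum_comm]
  refine Finset.sum_congr rfl fun n hn => ?_
  rw [Finset.sum_eq_single (x - n)]
  · rw [if_pos (sub_sub_cancel x n).symm]
  · intro a _ ha
    rw [if_neg (by omega), zero_mul]
  · exact fun h => absurd (hE n hn) h

lemma sum_norm_finsetKernel_rpow_le {p : ℝ} (hp : 0 < p) (T : Finset ℤ) :
    ∑ m ∈ T, ‖finsetKernel W F m‖ ^ p ≤ ∑ n ∈ W, |F n| ^ p := by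
  classical
  calc ∑ m ∈ T, ‖finsetKernel W F m‖ ^ p
      ≤ ∑ m ∈ W.map Nat.castEmbedding, ‖finsetKernel W F m‖ ^ p :=
        (Finset.sum_le_sum_of_subset_of_nonneg (t := T ∪ W.map Nat.castEmbedding)
          Finset.subset_union_left fun _ _ _ => by positivity).trans_eq <|
        (Finset.sum_subset Finset.subset_union_right fun m _ hm => by
          rw [finsetKernel_eq_zero F hm, norm_zero, Real.zero_rpow hp.ne']).symm
    _ = ∑ n ∈ W, |F n| ^ p := by
        rw [Finset.sum_map]
        refine Finset.sum_congr rfl fun n hn => ?_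
        rw [Nat.castEmbedding_apply, finsetKernel_natCast F hn, Complex.norm_real, Real.norm_eq_abs]

namespace ConvolutionBound

lemma finsetKernel_mono (h : ConvolutionBound (finsetKernel W F') r D)
    (hF : ∀ n ∈ W, |F n| ≤ F' n) : ConvolutionBound (finsetKernel W F) r D := by
  have real (m : ℤ) : finsetKernel W F' m =
      ((∑ n ∈ W, if (n : ℤ) = m then F' n else 0 : ℝ) : ℂ) := by
    simp only [finsetKernel_apply, Complex.ofReal_sum, apply_ite Complex.ofReal,
      Complex.ofReal_zero]
  rw [funext real] at h
  refine h.mono fun m => norm_sum_le_of_le _ fun n hn => ?_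
  split_ifs
  · rw [Complex.norm_real]
    exact hF n hn
  · exact norm_zero.le

theorem finsetKernel_young {p : ℝ} (hp : 1 ≤ p) (hr : 0 < r) (hpr : 1 / r = 1 - 1 / (2 * p))
    (hD : 0 < D) (hF : ∑ n ∈ W, |F n| ^ p ≤ D ^ p) : ConvolutionBound (finsetKernel W F) r D :=
  young hp hr hpr hD fun T => (sum_norm_finsetKernel_rpow_le (one_pos.trans_le hp) T).trans hF

theorem finsetKernel_of_norm_sum_mul_pow_le
    (hF : ∀ u : ℂ, ‖u‖ = 1 → ‖∑ n ∈ W, (F n : ℂ) * u ^ n‖ ≤ D) :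
    ConvolutionBound (finsetKernel W F) 2 D := by
  refine of_norm_sum_mul_zpow_le (fun _ => finsetKernel_eq_zero F) fun u hu => ?_
  rw [Finset.sum_map]
  convert hF u hu using 4 with n hn
  · rw [Nat.castEmbedding_apply, finsetKernel_natCast F hn]
  · exact zpow_natCast u n

end ConvolutionBound

end FinsetKernel

section Duality

variable {E : Finset ℤ} {q r : ℝ}

lemma exists_windowNorm_le_one_sum_mul_eq (hqr : q.HolderConjugate r) (E : Finset ℤ) (h : ℤ → ℝ) :
    ∃ g : ℤ → ℝ, windowNorm r E g ≤ 1 ∧ ∑ x ∈ E, h x * g x = windowNorm q E h := by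
  obtain ⟨g, hg, hgh⟩ := (NNReal.isGreatest_Lp E (fun x => ‖h x‖₊) hqr).1
  refine ⟨fun x => SignType.sign (h x) * g x, ?_, ?_⟩
  · refine Real.rpow_le_one (sum_norm_rpow_nonneg r E _) ?_ hqr.symm.one_div_nonneg
    refine le_trans (Finset.sum_le_sum fun x _ => Real.rpow_le_rpow (norm_nonneg _) ?_
      hqr.symm.nonneg) (show ∑ x ∈ E, (g x : ℝ) ^ r ≤ 1 by exact_mod_cast hg)
    rw [norm_mul, NNReal.norm_eq]
    refine mul_le_of_le_one_left (g x).2 ?_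
    cases SignType.sign (h x) <;> simp
  · have := congrArg NNReal.toReal hgh
    push_cast at this
    rw [windowNorm, ← this]
    exact Finset.sum_congr rfl fun x _ => by rw [← mul_assoc, self_mul_sign, Real.norm_eq_abs]

lemma ofReal_windowNorm (hr : 0 ≤ r) (E : Finset ℤ) (f : ℤ → ℝ) :
    ENNReal.ofReal (windowNorm r E f) = (∑ x ∈ E, (‖f x‖₊ : ℝ≥0∞) ^ r) ^ (1 / r) := by
  rw [windowNorm, ← ENNReal.ofReal_rpow_of_nonneg (sum_norm_rpow_nonneg r E f) (by positivity),
    ENNReal.ofReal_sum_of_nonneg fun x _ => by positivity]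
  congr 1
  refine Finset.sum_congr rfl fun x _ => ?_
  rw [← ENNReal.ofReal_rpow_of_nonneg (norm_nonneg _) hr, ofReal_norm]
  rfl

lemma ofReal_windowNorm_le_lpNorm (hr : 0 ≤ r) (E : Finset ℤ) (f : ℤ → ℝ) :
    ENNReal.ofReal (windowNorm r E f) ≤ lpNorm r f := by
  rw [ofReal_windowNorm hr]
  exact ENNReal.rpow_le_rpow (ENNReal.sum_le_tsum E) (by positivity)

lemma lpNorm_le_of_forall_windowNorm_le (hr : 0 < r) {f : ℤ → ℝ} {C : ℝ≥0∞}
    (h : ∀ E, ENNReal.ofReal (windowNorm r E f) ≤ C) : lpNorm r f ≤ C := by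
  simp_rw [ofReal_windowNorm hr.le, one_div] at h
  rw [lpNorm, one_div, ENNReal.rpow_inv_le_iff hr, ENNReal.tsum_eq_iSup_sum]
  exact iSup_le fun E => (ENNReal.rpow_inv_le_iff hr).1 (h E)

end Duality

section PrimeKernel

variable {N y : ℕ} {b : ℤ}

/-- The integers `n < N` with `n ≡ b (mod y)`. -/
def residueWindow (N y : ℕ) (b : ℤ) : Finset ℕ :=
  (Finset.range N).filter fun n : ℕ => (n : ℤ) % (y : ℤ) = b % (y : ℤ)

lemma lt_of_mem_residueWindow {n : ℕ} (hn : n ∈ residueWindow N y b) : n < N :=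
  Finset.mem_range.1 (Finset.mem_filter.1 hn).1

/-- The weight `φ(y)/N · Λ(n)` of the prime-progression average. -/
def primeWeight (N y n : ℕ) : ℝ := (Nat.totient y : ℝ) / N * ArithmeticFunction.vonMangoldt n

lemma primeWeight_nonneg (N y n : ℕ) : 0 ≤ primeWeight N y n := by
  have := @ArithmeticFunction.vonMangoldt_nonneg n
  rw [primeWeight]
  positivity

lemma pavg_eq_sum_primeWeight_mul (f : ℤ → ℝ) (x : ℤ) :
    pavg N y b f x = ∑ n ∈ residueWindow N y b, primeWeight N y n * f (x - n) := by
  simp_rw [pavg, primeWeight, residueWindow, mul_assoc, Finset.mul_sum]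

lemma windowNorm_pavg_le {r D : ℝ} (hr : 1 < r) (hD : 0 ≤ D)
    (h : ConvolutionBound (finsetKernel (residueWindow N y b) (primeWeight N y)) r D)
    (F : Finset ℤ) (f : ℤ → ℝ) :
    ∃ E : Finset ℤ, windowNorm (r / (r - 1)) F (pavg N y b f) ≤ D * windowNorm r E f := by
  obtain ⟨g, hg, hsum⟩ := exists_windowNorm_le_one_sum_mul_eq
    (Real.HolderConjugate.conjExponent hr).symm F (pavg N y b f)
  let E : Finset ℤ := Finset.image₂ (fun (x : ℤ) (n : ℕ) => x - n) F (residueWindow N y b)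
  have mem_E {x : ℤ} (hx : x ∈ F) : ∀ n ∈ residueWindow N y b, x - n ∈ E :=
    fun n hn => Finset.mem_image₂.2 ⟨x, hx, n, hn, rfl⟩
  have form :
      bilinForm (fun a x => finsetKernel (residueWindow N y b) (primeWeight N y) (x - a)) E F
        (fun a => f a) (fun x => g x) = ((∑ x ∈ F, pavg N y b f x * g x : ℝ) : ℂ) := by
    rw [bilinForm, Finset.sum_comm, Complex.ofReal_sum]
    refine Finset.sum_congr rfl fun x hx => ?_
    rw [← Finset.sum_mul, sum_finsetKernel_mul (mem_E hx), pavg_eq_sum_primeWeight_mul]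
    push_cast
    rfl
  have key := h E F (fun a => f a) (fun x => g x)
  rw [form, hsum, Complex.norm_of_nonneg (windowNorm_nonneg _ _ _),
    windowNorm_congr fun a _ => Complex.norm_real (f a),
    windowNorm_congr fun x _ => Complex.norm_real (g x)] at key
  exact ⟨E, key.trans (mul_le_of_le_one_right (mul_nonneg hD (windowNorm_nonneg r E f)) hg)⟩

theorem lpNorm_pavg_le {r D : ℝ} (hr : 1 < r) (hD : 0 ≤ D)
    (h : ConvolutionBound (finsetKernel (residueWindow N y b) (primeWeight N y)) r D)
    (f : ℤ → ℝ) : lpNorm (r / (r - 1)) (pavg N y b f) ≤ ENNReal.ofReal D * lpNorm r f := by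
  refine lpNorm_le_of_forall_windowNorm_le (div_pos (by linarith) (sub_pos.2 hr)) fun F => ?_
  obtain ⟨E, hE⟩ := windowNorm_pavg_le hr hD h F f
  calc ENNReal.ofReal (windowNorm (r / (r - 1)) F (pavg N y b f))
      ≤ ENNReal.ofReal (D * windowNorm r E f) := ENNReal.ofReal_le_ofReal hE
    _ = ENNReal.ofReal D * ENNReal.ofReal (windowNorm r E f) := ENNReal.ofReal_mul hD
    _ ≤ ENNReal.ofReal D * lpNorm r f := by
        gcongr
        exact ofReal_windowNorm_le_lpNorm (by linarith) E f

end PrimeKernel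

section DivisorBound

variable {x ε : ℝ}

lemma natCast_add_one_le_mul_rpow (hx : 2 ≤ x) (hε : 0 < ε) (a : ℕ) :
    (a : ℝ) + 1 ≤ (1 + 1 / (ε * Real.log 2)) * x ^ (a * ε) := by
  have : 0 < Real.log 2 := Real.log_pos (by norm_num)
  have tangent : 1 + a * ε * Real.log 2 ≤ x ^ (a * ε) :=
    calc 1 + a * ε * Real.log 2 ≤ Real.exp (Real.log 2 * (a * ε)) := by
          linarith [Real.add_one_le_exp (Real.log 2 * (a * ε))]
      _ = (2 : ℝ) ^ (a * ε) := by rw [Real.rpow_def_of_pos (by norm_num)]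
      _ ≤ x ^ (a * ε) := by gcongr
  calc (a : ℝ) + 1 ≤ a + 1 + (a * ε * Real.log 2 + 1 / (ε * Real.log 2)) :=
        le_add_of_nonneg_right (by positivity)
    _ = (1 + 1 / (ε * Real.log 2)) * (1 + a * ε * Real.log 2) := by field_simp; ring
    _ ≤ (1 + 1 / (ε * Real.log 2)) * x ^ (a * ε) := by gcongr

lemma natCast_add_one_le_rpow (hx : 0 ≤ x) (hxε : 2 ≤ x ^ ε) (a : ℕ) :
    (a : ℝ) + 1 ≤ x ^ (a * ε) :=
  calc (a : ℝ) + 1 ≤ 2 ^ a := by exact_mod_cast Nat.lt_two_pow_self (n := a)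
    _ ≤ (x ^ ε) ^ a := by gcongr
    _ = x ^ (a * ε) := by rw [← Real.rpow_natCast, ← Real.rpow_mul hx, mul_comm]

lemma natCast_rpow_eq_prod_primeFactors {n : ℕ} (hn : n ≠ 0) (ε : ℝ) :
    (n : ℝ) ^ ε = ∏ p ∈ n.primeFactors, (p : ℝ) ^ (n.factorization p * ε) := by
  conv_lhs => rw [← Nat.prod_factorization_pow_eq_self hn]
  rw [Finsupp.prod, Nat.support_factorization]
  push_cast
  rw [← Real.finsetProd_rpow _ _ fun i _ => by positivity]
  refine Finset.prod_congr rfl fun p _ => ?_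
  rw [← Real.rpow_natCast, ← Real.rpow_mul (by positivity)]

-- Only the primes below `2 ^ (1 / ε)` contribute a factor larger than one to the constant.
theorem exists_card_divisors_le_rpow (hε : 0 < ε) :
    ∃ C : ℝ, 1 ≤ C ∧ ∀ n : ℕ, n ≠ 0 → (n.divisors.card : ℝ) ≤ C * (n : ℝ) ^ ε := by
  have : 0 < Real.log 2 := Real.log_pos (by norm_num)
  set K : ℝ := 1 + 1 / (ε * Real.log 2)
  have one_le_K : 1 ≤ K := le_add_of_nonneg_right (by positivity)
  obtain ⟨P, hP⟩ := exists_nat_ge ((2 : ℝ) ^ (1 / ε))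
  have prime_power {p : ℕ} (hp : p.Prime) (a : ℕ) :
      (a : ℝ) + 1 ≤ (if p < P then K else 1) * (p : ℝ) ^ (a * ε) := by
    split_ifs with h
    · exact natCast_add_one_le_mul_rpow (by exact_mod_cast hp.two_le) hε a
    · rw [one_mul]
      refine natCast_add_one_le_rpow p.cast_nonneg ?_ a
      rw [← Real.rpow_inv_le_iff_of_pos (by norm_num) p.cast_nonneg hε, ← one_div]
      exact hP.trans (by exact_mod_cast not_lt.1 h)
  refine ⟨K ^ P, one_le_pow₀ one_le_K, fun n hn => ?_⟩
  calc (n.divisors.card : ℝ) = ∏ p ∈ n.primeFactors, ((n.factorization p : ℝ) + 1) := by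
        rw [Nat.card_divisors hn]
        push_cast
        rfl
    _ ≤ ∏ p ∈ n.primeFactors, (if p < P then K else 1) * (p : ℝ) ^ (n.factorization p * ε) :=
        Finset.prod_le_prod (fun p _ => by positivity) fun p hp =>
          prime_power (Nat.prime_of_mem_primeFactors hp) _
    _ = (∏ p ∈ n.primeFactors, if p < P then K else 1) * (n : ℝ) ^ ε := by
        rw [Finset.prod_mul_distrib, natCast_rpow_eq_prod_primeFactors hn]
    _ ≤ K ^ P * (n : ℝ) ^ ε := by
        gcongr
        rw [Finset.prod_ite, Finset.prod_const, Finset.prod_const_one, mul_one]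
        refine pow_le_pow_right₀ one_le_K ?_
        calc _ ≤ (Finset.range P).card :=
              Finset.card_le_card fun p hp => Finset.mem_range.2 (Finset.mem_filter.1 hp).2
          _ = P := Finset.card_range P

end DivisorBound

section RamanujanSum

open scoped ArithmeticFunction.Moebius
open ArithmeticFunction (IsMultiplicative)

lemma eq_prod_primeFactors_of_squarefree {R : Type*} [CommSemiring R] {f : ArithmeticFunction R}
    (hf : f.IsMultiplicative) {n : ℕ} (hn : Squarefree n) : f n = ∏ p ∈ n.primeFactors, f p := by
  rw [← hf.map_prod_of_subset_primeFactors n n.primeFactors subset_rfl,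
    Nat.prod_primeFactors_of_squarefree hn]

/-- The arithmetic function `d ↦ d · 1_{d ∣ n}`. -/
def dvdIndicator (n : ℕ) : ArithmeticFunction ℝ := ⟨fun d => if d ∣ n then (d : ℝ) else 0, by simp⟩

lemma dvdIndicator_apply (n d : ℕ) : dvdIndicator n d = if d ∣ n then (d : ℝ) else 0 := rfl

lemma isMultiplicative_dvdIndicator (n : ℕ) : (dvdIndicator n).IsMultiplicative := by
  refine ⟨by simp [dvdIndicator_apply], fun {a b} hab => ?_⟩
  have : a * b ∣ n ↔ a ∣ n ∧ b ∣ n :=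
    ⟨fun h => ⟨(dvd_mul_right a b).trans h, (dvd_mul_left b a).trans h⟩,
      fun h => hab.mul_dvd_of_dvd_of_dvd h.1 h.2⟩
  by_cases ha : a ∣ n <;> by_cases hb : b ∣ n <;> simp [dvdIndicator_apply, this, ha, hb]

/-- Ramanujan's sum `c_q(n)` as an arithmetic function of `q`, defined by Kluyver's formula
`c_q(n) = ∑_{d ∣ (q, n)} μ(q / d) d`. -/
def ramanujanSum (n : ℕ) : ArithmeticFunction ℝ := (μ : ArithmeticFunction ℝ) * dvdIndicator n

lemma ramanujanSum_apply (n q : ℕ) :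
    ramanujanSum n q = ∑ d ∈ q.divisors, (μ (q / d) : ℝ) * if d ∣ n then (d : ℝ) else 0 := by
  rw [ramanujanSum, ArithmeticFunction.mul_apply, Nat.sum_divisorsAntidiagonal'
    (f := fun a b => (μ : ArithmeticFunction ℝ) a * dvdIndicator n b)]
  rfl

lemma isMultiplicative_ramanujanSum (n : ℕ) : (ramanujanSum n).IsMultiplicative :=
  ArithmeticFunction.isMultiplicative_moebius.intCast.mul (isMultiplicative_dvdIndicator n)

lemma ramanujanSum_prime {p : ℕ} (hp : p.Prime) (n : ℕ) :
    ramanujanSum n p = (if p ∣ n then (p : ℝ) else 0) - 1 := by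
  rw [ramanujanSum_apply, hp.sum_divisors]
  simp [ArithmeticFunction.moebius_apply_prime hp, Nat.div_self hp.pos, sub_eq_add_neg]

lemma ramanujanSum_of_coprime {q n : ℕ} (hq : q ≠ 0) (h : Nat.Coprime q n) :
    ramanujanSum n q = (μ q : ℝ) := by
  rw [ramanujanSum_apply, Finset.sum_eq_single 1]
  · simp
  · intro d hd hd1
    rw [if_neg fun hdn => hd1 (Nat.eq_one_of_dvd_coprimes h (Nat.dvd_of_mem_divisors hd) hdn),
      mul_zero]
  · simp [hq]

lemma abs_moebius_cast_le_one (m : ℕ) : |(μ m : ℝ)| ≤ 1 := by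
  exact_mod_cast ArithmeticFunction.abs_moebius_le_one

lemma abs_ramanujanSum_le (q n : ℕ) :
    |ramanujanSum n q| ≤ ∑ d ∈ q.divisors, if d ∣ n then (d : ℝ) else 0 := by
  rw [ramanujanSum_apply]
  refine (Finset.abs_sum_le_sum_abs _ _).trans (Finset.sum_le_sum fun d _ => ?_)
  have nonneg : (0 : ℝ) ≤ if d ∣ n then (d : ℝ) else 0 := by split_ifs <;> positivity
  rw [abs_mul, abs_of_nonneg nonneg]
  exact mul_le_of_le_one_left nonneg (abs_moebius_cast_le_one _)

lemma sum_nthRootsFinset_one_pow {m : ℕ} (hm : 0 < m) (n : ℕ) :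
    ∑ z ∈ Polynomial.nthRootsFinset m (1 : ℂ), z ^ n = if m ∣ n then (m : ℂ) else 0 := by
  classical
  have : NeZero m := ⟨hm.ne'⟩
  have hζ := Complex.isPrimitiveRoot_exp m hm.ne'
  set ζ := Complex.exp (2 * Real.pi * Complex.I / m)
  have image : Polynomial.nthRootsFinset m (1 : ℂ) = (Finset.range m).image (ζ ^ ·) := by
    ext z
    simp only [Polynomial.mem_nthRootsFinset hm, Finset.mem_image, Finset.mem_range]
    refine ⟨fun hz => hζ.eq_pow_of_pow_eq_one hz, ?_⟩
    rintro ⟨i, -, rfl⟩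
    rw [← pow_mul, mul_comm, pow_mul, hζ.pow_eq_one, one_pow]
  rw [image, Finset.sum_image fun i hi j hj => hζ.pow_inj (by simpa using hi) (by simpa using hj)]
  simp_rw [← pow_mul, mul_comm _ n, pow_mul]
  split_ifs with h
  · simp [(hζ.pow_eq_one_iff_dvd n).2 h]
  · have geom := geom_sum_mul (ζ ^ n) m
    rw [pow_right_comm, hζ.pow_eq_one, one_pow, sub_self] at geom
    exact (mul_eq_zero.1 geom).resolve_right
      (sub_ne_zero.2 (mt (hζ.pow_eq_one_iff_dvd n).1 h))

theorem ramanujanSum_eq_sum_primitiveRoots {q : ℕ} (hq : 0 < q) (n : ℕ) :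
    (ramanujanSum n q : ℂ) = ∑ z ∈ primitiveRoots q ℂ, z ^ n := by
  classical
  have sum_divisors (m : ℕ) (hm : m > 0) : ∑ i ∈ m.divisors, ∑ z ∈ primitiveRoots i ℂ, z ^ n =
      if m ∣ n then (m : ℂ) else 0 := by
    have : NeZero m := ⟨hm.ne'⟩
    rw [← Finset.sum_biUnion fun i _ j _ hij => IsPrimitiveRoot.disjoint hij,
      ← IsPrimitiveRoot.nthRoots_one_eq_biUnion_primitiveRoots, sum_nthRootsFinset_one_pow hm]
  rw [← ArithmeticFunction.sum_eq_iff_sum_mul_moebius_eq.1 sum_divisors q hq,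
    Nat.sum_divisorsAntidiagonal' (f := fun a b => (μ a : ℂ) * if b ∣ n then (b : ℂ) else 0),
    ramanujanSum_apply]
  simp only [Complex.ofReal_sum, Complex.ofReal_mul, Complex.ofReal_intCast,
    apply_ite Complex.ofReal, Complex.ofReal_natCast, Complex.ofReal_zero]

/-- Euler's totient as a real-valued arithmetic function. -/
def totientFun : ArithmeticFunction ℝ := ⟨fun n => (Nat.totient n : ℝ), by simp⟩

lemma totientFun_apply (n : ℕ) : totientFun n = (Nat.totient n : ℝ) := rfl

lemma isMultiplicative_totientFun : totientFun.IsMultiplicative :=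
  ⟨by simp [totientFun_apply], fun h => by simp [totientFun_apply, Nat.totient_mul h]⟩

/-- The multiplicative function `n ↦ ∏_{p ∣ n} (p - 2)`. It enters through the identity
`c_p(n) ^ 2 = (p - 1) + (p - 2) c_p(n)`. -/
def subTwoFun : ArithmeticFunction ℝ :=
  ArithmeticFunction.prodPrimeFactors (fun p : ℕ => (p : ℝ) - 2)

lemma isMultiplicative_subTwoFun : subTwoFun.IsMultiplicative :=
  IsMultiplicative.prodPrimeFactors _

lemma totient_eq_prod_of_squarefree {n : ℕ} (hn : Squarefree n) :
    (Nat.totient n : ℝ) = ∏ p ∈ n.primeFactors, ((p : ℝ) - 1) := by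
  rw [← totientFun_apply, eq_prod_primeFactors_of_squarefree isMultiplicative_totientFun hn]
  refine Finset.prod_congr rfl fun p hp => ?_
  have hp := Nat.prime_of_mem_primeFactors hp
  rw [totientFun_apply, Nat.totient_prime hp, Nat.cast_sub hp.one_le, Nat.cast_one]

lemma two_le_cast_of_mem_primeFactors {n p : ℕ} (hp : p ∈ n.primeFactors) : (2 : ℝ) ≤ p := by
  exact_mod_cast (Nat.prime_of_mem_primeFactors hp).two_le

lemma abs_subTwoFun_le {n : ℕ} (hn : Squarefree n) : |subTwoFun n| ≤ Nat.totient n := by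
  have nonneg : ∀ p ∈ n.primeFactors, (0 : ℝ) ≤ (p : ℝ) - 2 := fun p hp =>
    sub_nonneg.2 (two_le_cast_of_mem_primeFactors hp)
  rw [subTwoFun, ArithmeticFunction.prodPrimeFactors_apply hn.ne_zero,
    totient_eq_prod_of_squarefree hn, abs_of_nonneg (Finset.prod_nonneg nonneg)]
  exact Finset.prod_le_prod nonneg fun p _ => by linarith

lemma le_totient_mul_card_divisors {n : ℕ} (hn : Squarefree n) :
    (n : ℝ) ≤ Nat.totient n * n.divisors.card := by
  have card_divisors : (n.divisors.card : ℝ) = ∏ _p ∈ n.primeFactors, (2 : ℝ) := by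
    rw [Nat.card_divisors hn.ne_zero]
    push_cast
    refine Finset.prod_congr rfl fun p hp => ?_
    rw [Nat.factorization_eq_one_of_squarefree hn (Nat.prime_of_mem_primeFactors hp)
      (Nat.dvd_of_mem_primeFactors hp)]
    norm_num
  conv_lhs => rw [← Nat.prod_primeFactors_of_squarefree hn]
  rw [card_divisors, totient_eq_prod_of_squarefree hn, ← Finset.prod_mul_distrib]
  push_cast
  refine Finset.prod_le_prod (fun p _ => by positivity) fun p hp => ?_
  linarith [two_le_cast_of_mem_primeFactors hp]

lemma ramanujanSum_prime_sq {p : ℕ} (hp : p.Prime) (n : ℕ) :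
    ramanujanSum n p ^ 2 = Nat.totient p + subTwoFun p * ramanujanSum n p := by
  rw [Nat.totient_prime hp, Nat.cast_sub hp.one_le, subTwoFun,
    ArithmeticFunction.prodPrimeFactors_apply hp.ne_zero, hp.primeFactors,
    Finset.prod_singleton, ramanujanSum_prime hp]
  push_cast
  split_ifs <;> ring

lemma ramanujanSum_sq {g : ℕ} (hg : Squarefree g) (n : ℕ) :
    ramanujanSum n g ^ 2 =
      ∑ d ∈ g.divisorsAntidiagonal, (Nat.totient d.1 : ℝ) * subTwoFun d.2 * ramanujanSum n d.2 := by
  have hc := isMultiplicative_ramanujanSum n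
  calc ramanujanSum n g ^ 2
      = ∏ p ∈ g.primeFactors, (totientFun + subTwoFun.pmul (ramanujanSum n)) p := by
        rw [eq_prod_primeFactors_of_squarefree hc hg, ← Finset.prod_pow]
        exact Finset.prod_congr rfl fun p hp =>
          ramanujanSum_prime_sq (Nat.prime_of_mem_primeFactors hp) n
    _ = (totientFun * subTwoFun.pmul (ramanujanSum n)) g := by
        rw [← ArithmeticFunction.prodPrimeFactors_apply hg.ne_zero,
          IsMultiplicative.prodPrimeFactors_add_of_squarefree isMultiplicative_totientFun
            (isMultiplicative_subTwoFun.pmul hc) hg]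
    _ = _ := by
        simp only [ArithmeticFunction.mul_apply, ArithmeticFunction.pmul_apply, totientFun_apply,
          mul_assoc]

lemma ramanujanSum_mul {a b g : ℕ} (hs : Squarefree (a * b * g)) (n : ℕ) :
    ramanujanSum n (a * g) * ramanujanSum n (b * g) =
      ∑ d ∈ g.divisorsAntidiagonal,
        (Nat.totient d.1 : ℝ) * subTwoFun d.2 * ramanujanSum n (a * b * d.2) := by
  have hc := isMultiplicative_ramanujanSum n
  have cabg := Nat.coprime_of_squarefree_mul hs
  have cab := Nat.coprime_of_squarefree_mul (hs.squarefree_of_dvd (dvd_mul_right (a * b) g))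
  rw [hc.map_mul_of_coprime cabg.coprime_mul_right, hc.map_mul_of_coprime cabg.coprime_mul_left,
    mul_mul_mul_comm, ← sq, ramanujanSum_sq (hs.squarefree_of_dvd (dvd_mul_left _ _)),
    ← hc.map_mul_of_coprime cab, Finset.mul_sum]
  refine Finset.sum_congr rfl fun d hd => ?_
  have dvd : d.2 ∣ g := ⟨d.1, by rw [mul_comm, (Nat.mem_divisorsAntidiagonal.1 hd).1]⟩
  rw [hc.map_mul_of_coprime (cabg.coprime_dvd_right dvd), mul_left_comm]

end RamanujanSum

section SelbergMajorant

open scoped ArithmeticFunction.Moebius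

variable {y R : ℕ}

/-- The moduli in Selberg's majorant: squarefree, at most `R` and coprime to `y`. -/
def sieveModuli (y R : ℕ) : Finset ℕ :=
  (Finset.Icc 1 R).filter fun m => Squarefree m ∧ Nat.Coprime m y

lemma mem_sieveModuli {m : ℕ} :
    m ∈ sieveModuli y R ↔ (1 ≤ m ∧ m ≤ R) ∧ Squarefree m ∧ Nat.Coprime m y := by
  simp [sieveModuli]

lemma mem_sieveModuli_of_dvd {d m : ℕ} (hm : m ∈ sieveModuli y R) (hd : d ∣ m) :
    d ∈ sieveModuli y R := by
  obtain ⟨⟨hm1, hmR⟩, hs, hc⟩ := mem_sieveModuli.1 hm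
  exact mem_sieveModuli.2 ⟨⟨Nat.pos_of_dvd_of_pos hd hm1, (Nat.le_of_dvd hm1 hd).trans hmR⟩,
    hs.squarefree_of_dvd hd, hc.coprime_dvd_left hd⟩

/-- The normalising sum `∑ 1 / φ(m)` in Selberg's majorant. -/
def sieveMass (y R : ℕ) : ℝ := ∑ m ∈ sieveModuli y R, 1 / (Nat.totient m : ℝ)

lemma one_le_sieveMass (y : ℕ) (hR : 1 ≤ R) : 1 ≤ sieveMass y R :=
  calc (1 : ℝ) = 1 / (Nat.totient 1 : ℝ) := by simp
    _ ≤ sieveMass y R := Finset.single_le_sum (f := fun m : ℕ => 1 / (Nat.totient m : ℝ))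
        (fun _ _ => by positivity)
        (mem_sieveModuli.2 ⟨⟨le_rfl, hR⟩, squarefree_one, Nat.coprime_one_left y⟩)

/-- The Ramanujan expansion whose square is the unnormalised Selberg majorant. -/
def sieveSum (y R n : ℕ) : ℝ :=
  ∑ m ∈ sieveModuli y R, (μ m : ℝ) / Nat.totient m * ramanujanSum n m

lemma sieveSum_of_coprime {n : ℕ} (h : ∀ m ∈ sieveModuli y R, Nat.Coprime m n) :
    sieveSum y R n = sieveMass y R := by
  refine Finset.sum_congr rfl fun m hm => ?_
  have hs := (mem_sieveModuli.1 hm).2.1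
  rw [ramanujanSum_of_coprime hs.ne_zero (h m hm), div_mul_eq_mul_div, ← sq]
  congr 1
  exact_mod_cast ArithmeticFunction.moebius_sq_eq_one_of_squarefree hs

/-- Selberg's majorant, normalised to be `sieveMass y R` on the integers that are coprime to all
the moduli. -/
def selbergMajorant (y R n : ℕ) : ℝ := sieveSum y R n ^ 2 / sieveMass y R

lemma selbergMajorant_of_coprime {n : ℕ} (h : ∀ m ∈ sieveModuli y R, Nat.Coprime m n) :
    selbergMajorant y R n = sieveMass y R := by
  rw [selbergMajorant, sieveSum_of_coprime h, sq, mul_self_div_self]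

lemma selbergMajorant_nonneg (y R n : ℕ) : 0 ≤ selbergMajorant y R n :=
  div_nonneg (sq_nonneg _) (Finset.sum_nonneg fun _ _ => by positivity)

/-- The index set of the expansion of `sieveSum ^ 2`. The quadruple `((a, b), (k, h))` stands for
the pair of moduli `a k h` and `b k h`, whose greatest common divisor is `k h`. -/
def sieveIndex (y R : ℕ) : Finset ((ℕ × ℕ) × ℕ × ℕ) :=
  ((Finset.Icc 1 R ×ˢ Finset.Icc 1 R) ×ˢ Finset.Icc 1 R ×ˢ Finset.Icc 1 R).filter fun τ =>
    Squarefree (τ.1.1 * τ.1.2 * (τ.2.1 * τ.2.2)) ∧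
      τ.1.1 * (τ.2.1 * τ.2.2) ∈ sieveModuli y R ∧ τ.1.2 * (τ.2.1 * τ.2.2) ∈ sieveModuli y R

lemma mem_sieveIndex {a b k h : ℕ} :
    ((a, b), (k, h)) ∈ sieveIndex y R ↔ Squarefree (a * b * (k * h)) ∧
      a * (k * h) ∈ sieveModuli y R ∧ b * (k * h) ∈ sieveModuli y R := by
  refine ⟨fun hτ => (Finset.mem_filter.1 hτ).2, fun hτ => Finset.mem_filter.2 ⟨?_, hτ⟩⟩
  have mem_Icc {d m : ℕ} (hm : m ∈ sieveModuli y R) (hd : d ∣ m) : d ∈ Finset.Icc 1 R :=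
    Finset.mem_Icc.2 (mem_sieveModuli.1 (mem_sieveModuli_of_dvd hm hd)).1
  simp only [Finset.mem_product]
  exact ⟨⟨mem_Icc hτ.2.1 ⟨k * h, by ring⟩, mem_Icc hτ.2.2 ⟨k * h, by ring⟩⟩,
    mem_Icc hτ.2.1 ⟨a * h, by ring⟩, mem_Icc hτ.2.1 ⟨a * k, by ring⟩⟩

/-- The modulus of the Ramanujan sum attached to an index. -/
def sieveIndexModulus (τ : (ℕ × ℕ) × ℕ × ℕ) : ℕ := τ.1.1 * τ.1.2 * τ.2.2

/-- The coefficient of the Ramanujan sum attached to an index. -/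
def sieveIndexWeight (τ : (ℕ × ℕ) × ℕ × ℕ) : ℝ :=
  (μ (τ.1.1 * (τ.2.1 * τ.2.2)) : ℝ) / Nat.totient (τ.1.1 * (τ.2.1 * τ.2.2)) *
    ((μ (τ.1.2 * (τ.2.1 * τ.2.2)) : ℝ) / Nat.totient (τ.1.2 * (τ.2.1 * τ.2.2))) *
    ((Nat.totient τ.2.1 : ℝ) * subTwoFun τ.2.2)

/-- The coefficient of the `q`-th Ramanujan sum in `selbergMajorant`. -/
def sieveCoeff (y R q : ℕ) : ℝ :=
  (∑ τ ∈ sieveIndex y R with sieveIndexModulus τ = q, sieveIndexWeight τ) / sieveMass y R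

lemma sieveIndexModulus_mem {τ : (ℕ × ℕ) × ℕ × ℕ} (hτ : τ ∈ sieveIndex y R) :
    sieveIndexModulus τ ∈ sieveModuli y (R ^ 2) := by
  obtain ⟨⟨a, b⟩, k, h⟩ := τ
  obtain ⟨hs, h₁, h₂⟩ := mem_sieveIndex.1 hτ
  obtain ⟨⟨p₁, l₁⟩, -, c₁⟩ := mem_sieveModuli.1 h₁
  obtain ⟨⟨p₂, l₂⟩, -, c₂⟩ := mem_sieveModuli.1 h₂
  have dvd : a * b * h ∣ a * (k * h) * (b * (k * h)) := ⟨k * k * h, by ring⟩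
  have squarefree : Squarefree (a * b * h) := hs.squarefree_of_dvd ⟨k, by ring⟩
  refine mem_sieveModuli.2 ⟨⟨squarefree.ne_zero.bot_lt, ?_⟩, squarefree,
    (c₁.mul_left c₂).coprime_dvd_left dvd⟩
  calc a * b * h ≤ a * (k * h) * (b * (k * h)) := Nat.le_of_dvd (Nat.mul_pos p₁ p₂) dvd
    _ ≤ R ^ 2 := (Nat.mul_le_mul l₁ l₂).trans_eq (sq R).symm

lemma squarefree_div_gcd_mul {m₁ m₂ : ℕ} (h₁ : Squarefree m₁) (h₂ : Squarefree m₂) :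
    Squarefree (m₁ / m₁.gcd m₂ * (m₂ / m₁.gcd m₂) * m₁.gcd m₂) := by
  have e₁ : m₁ / m₁.gcd m₂ * m₁.gcd m₂ = m₁ := Nat.div_mul_cancel (Nat.gcd_dvd_left _ _)
  have e₂ : m₂ / m₁.gcd m₂ * m₁.gcd m₂ = m₂ := Nat.div_mul_cancel (Nat.gcd_dvd_right _ _)
  have coprime : Nat.Coprime (m₁ / m₁.gcd m₂) (m₂ / m₁.gcd m₂) :=
    Nat.coprime_div_gcd_div_gcd (Nat.gcd_pos_of_pos_left _ h₁.ne_zero.bot_lt)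
  have coprime_gcd : Nat.Coprime (m₂ / m₁.gcd m₂) (m₁.gcd m₂) :=
    Nat.coprime_of_squarefree_mul (e₂.symm ▸ h₂)
  rw [mul_right_comm, e₁, Nat.squarefree_mul]
  · exact ⟨h₁, h₂.squarefree_of_dvd (Nat.div_dvd_of_dvd (Nat.gcd_dvd_right _ _))⟩
  · conv_lhs => rw [← e₁]
    exact coprime.mul_left coprime_gcd.symm

lemma ramanujanSum_mul_of_squarefree {m₁ m₂ : ℕ} (h₁ : Squarefree m₁) (h₂ : Squarefree m₂)
    (n : ℕ) :
    ramanujanSum n m₁ * ramanujanSum n m₂ = ∑ d ∈ (m₁.gcd m₂).divisorsAntidiagonal,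
      (Nat.totient d.1 : ℝ) * subTwoFun d.2 *
        ramanujanSum n (m₁ / m₁.gcd m₂ * (m₂ / m₁.gcd m₂) * d.2) := by
  rw [← ramanujanSum_mul (squarefree_div_gcd_mul h₁ h₂), Nat.div_mul_cancel (Nat.gcd_dvd_left _ _),
    Nat.div_mul_cancel (Nat.gcd_dvd_right _ _)]

lemma gcd_of_squarefree_mul {a b g : ℕ} (hs : Squarefree (a * b * g)) :
    (a * g).gcd (b * g) = g := by
  rw [Nat.gcd_mul_right, (Nat.coprime_of_squarefree_mul
    (hs.squarefree_of_dvd (dvd_mul_right (a * b) g))).gcd_eq_one, one_mul]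

lemma sieveSum_sq (y R n : ℕ) :
    sieveSum y R n ^ 2 = ∑ m ∈ sieveModuli y R ×ˢ sieveModuli y R,
      ∑ d ∈ (m.1.gcd m.2).divisorsAntidiagonal,
        (μ m.1 : ℝ) / Nat.totient m.1 * ((μ m.2 : ℝ) / Nat.totient m.2) *
          ((Nat.totient d.1 : ℝ) * subTwoFun d.2 *
            ramanujanSum n (m.1 / m.1.gcd m.2 * (m.2 / m.1.gcd m.2) * d.2)) := by
  rw [sq, sieveSum, Finset.sum_mul_sum, ← Finset.sum_product']
  refine Finset.sum_congr rfl fun m hm => ?_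
  rw [mul_mul_mul_comm, ramanujanSum_mul_of_squarefree
    (mem_sieveModuli.1 (Finset.mem_product.1 hm).1).2.1
    (mem_sieveModuli.1 (Finset.mem_product.1 hm).2).2.1, Finset.mul_sum]

lemma sieveSum_sq_eq_sum_sieveIndex (y R n : ℕ) :
    sieveSum y R n ^ 2 =
      ∑ τ ∈ sieveIndex y R, sieveIndexWeight τ * ramanujanSum n (sieveIndexModulus τ) := by
  rw [sieveSum_sq, Finset.sum_sigma']
  symm
  refine Finset.sum_nbij'
    (fun τ => ⟨(τ.1.1 * (τ.2.1 * τ.2.2), τ.1.2 * (τ.2.1 * τ.2.2)), τ.2⟩)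
    (fun σ => ((σ.1.1 / σ.1.1.gcd σ.1.2, σ.1.2 / σ.1.1.gcd σ.1.2), σ.2)) ?_ ?_ ?_ ?_ ?_
  · rintro ⟨⟨a, b⟩, k, h⟩ hτ
    obtain ⟨hs, h₁, h₂⟩ := mem_sieveIndex.1 hτ
    simp only [Finset.mem_sigma, Finset.mem_product, Nat.mem_divisorsAntidiagonal,
      gcd_of_squarefree_mul hs]
    exact ⟨⟨h₁, h₂⟩, trivial, right_ne_zero_of_mul hs.ne_zero⟩
  · rintro ⟨⟨m₁, m₂⟩, k, h⟩ hσ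
    simp only [Finset.mem_sigma, Finset.mem_product, Nat.mem_divisorsAntidiagonal] at hσ
    obtain ⟨⟨h₁, h₂⟩, hd, -⟩ := hσ
    rw [mem_sieveIndex, hd, Nat.div_mul_cancel (Nat.gcd_dvd_left _ _),
      Nat.div_mul_cancel (Nat.gcd_dvd_right _ _)]
    exact ⟨squarefree_div_gcd_mul (mem_sieveModuli.1 h₁).2.1 (mem_sieveModuli.1 h₂).2.1, h₁, h₂⟩
  · rintro ⟨⟨a, b⟩, k, h⟩ hτ
    have hs := (mem_sieveIndex.1 hτ).1
    have hg := (right_ne_zero_of_mul hs.ne_zero).bot_lt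
    simp only [gcd_of_squarefree_mul hs, Nat.mul_div_cancel _ hg]
  · rintro ⟨⟨m₁, m₂⟩, k, h⟩ hσ
    simp only [Finset.mem_sigma, Nat.mem_divisorsAntidiagonal] at hσ
    simp only [hσ.2.1, Nat.div_mul_cancel (Nat.gcd_dvd_left _ _),
      Nat.div_mul_cancel (Nat.gcd_dvd_right _ _)]
  · rintro ⟨⟨a, b⟩, k, h⟩ hτ
    have hs := (mem_sieveIndex.1 hτ).1
    have hg := (right_ne_zero_of_mul hs.ne_zero).bot_lt
    simp only [sieveIndexWeight, sieveIndexModulus, gcd_of_squarefree_mul hs,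
      Nat.mul_div_cancel _ hg, mul_assoc]

theorem selbergMajorant_eq_sum_ramanujanSum (y R n : ℕ) :
    selbergMajorant y R n =
      ∑ q ∈ sieveModuli y (R ^ 2), sieveCoeff y R q * ramanujanSum n q := by
  rw [selbergMajorant, sieveSum_sq_eq_sum_sieveIndex,
    ← Finset.sum_fiberwise_of_maps_to fun τ hτ => sieveIndexModulus_mem hτ, Finset.sum_div]
  refine Finset.sum_congr rfl fun q _ => ?_
  rw [sieveCoeff, div_mul_eq_mul_div, Finset.sum_mul]
  congr 1
  exact Finset.sum_congr rfl fun τ hτ => by rw [(Finset.mem_filter.1 hτ).2]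

lemma abs_sieveIndexWeight_le {τ : (ℕ × ℕ) × ℕ × ℕ} (hτ : τ ∈ sieveIndex y R) :
    |sieveIndexWeight τ| ≤
      1 / (Nat.totient (sieveIndexModulus τ) : ℝ) * (1 / (Nat.totient τ.2.1 : ℝ)) := by
  obtain ⟨⟨a, b⟩, k, h⟩ := τ
  have hs := (mem_sieveIndex.1 hτ).1
  have pos : ∀ d : ℕ, d ∣ a * b * (k * h) → (0 : ℝ) < Nat.totient d := fun d hd => by
    exact_mod_cast Nat.totient_pos.2 (Nat.pos_of_dvd_of_pos hd hs.ne_zero.bot_lt)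
  have pa := pos a ⟨b * (k * h), by ring⟩
  have pb := pos b ⟨a * (k * h), by ring⟩
  have pk := pos k ⟨a * b * h, by ring⟩
  have ph := pos h ⟨a * b * k, by ring⟩
  have cabg : Nat.Coprime (a * b) (k * h) := Nat.coprime_of_squarefree_mul hs
  have cab : Nat.Coprime a b :=
    Nat.coprime_of_squarefree_mul (hs.squarefree_of_dvd (dvd_mul_right (a * b) _))
  have ckh : Nat.Coprime k h :=
    Nat.coprime_of_squarefree_mul (hs.squarefree_of_dvd (dvd_mul_left (k * h) _))
  have bound (m : ℕ) : |(μ m : ℝ) / Nat.totient m| ≤ 1 / Nat.totient m := by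
    rw [abs_div, Nat.abs_cast]
    gcongr
    exact abs_moebius_cast_le_one m
  simp only [sieveIndexWeight, sieveIndexModulus, abs_mul, Nat.abs_cast]
  calc _ ≤ 1 / (Nat.totient (a * (k * h)) : ℝ) * (1 / (Nat.totient (b * (k * h)) : ℝ)) *
        (Nat.totient k * Nat.totient h) := by
        gcongr
        · exact bound _
        · exact bound _
        · exact abs_subTwoFun_le (hs.squarefree_of_dvd ⟨a * b * k, by ring⟩)
    _ = 1 / (Nat.totient (a * b * h) : ℝ) * (1 / (Nat.totient k : ℝ)) := by
        rw [Nat.totient_mul cabg.coprime_mul_right, Nat.totient_mul cabg.coprime_mul_left,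
          Nat.totient_mul ckh, Nat.totient_mul cabg.coprime_mul_left_right, Nat.totient_mul cab]
        push_cast
        field_simp

lemma sum_sieveIndex_modulus_eq_le {q : ℕ} (hq : q ≠ 0) :
    ∑ τ ∈ sieveIndex y R with sieveIndexModulus τ = q, 1 / (Nat.totient τ.2.1 : ℝ) ≤
      (q.divisors.card : ℝ) ^ 2 * sieveMass y R := by
  let forget : (ℕ × ℕ) × ℕ × ℕ → (ℕ × ℕ) × ℕ := fun τ => (τ.1, τ.2.1)
  have inj : Set.InjOn forget (Finset.filter (sieveIndexModulus · = q) (sieveIndex y R)) := by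
    rintro ⟨⟨a, b⟩, k, h⟩ hτ ⟨⟨a', b'⟩, k', h'⟩ hτ' heq
    simp only [forget, Prod.mk.injEq] at heq
    obtain ⟨⟨rfl, rfl⟩, rfl⟩ := heq
    obtain ⟨-, e : a * b * h = q⟩ := Finset.mem_filter.1 hτ
    obtain ⟨-, e' : a * b * h' = q⟩ := Finset.mem_filter.1 hτ'
    rw [Nat.eq_of_mul_eq_mul_left (left_ne_zero_of_mul (e ▸ hq)).bot_lt (e.trans e'.symm)]
  have maps : Finset.image forget (Finset.filter (sieveIndexModulus · = q) (sieveIndex y R)) ⊆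
      (q.divisors ×ˢ q.divisors) ×ˢ sieveModuli y R := by
    refine Finset.image_subset_iff.2 fun ⟨⟨a, b⟩, k, h⟩ hτ => ?_
    obtain ⟨mem, e : a * b * h = q⟩ := Finset.mem_filter.1 hτ
    simp only [forget, Finset.mem_product, Nat.mem_divisors]
    exact ⟨⟨⟨⟨b * h, by rw [← e]; ring⟩, hq⟩, ⟨a * h, by rw [← e]; ring⟩, hq⟩,
      mem_sieveModuli_of_dvd (mem_sieveIndex.1 mem).2.1 ⟨a * h, by ring⟩⟩
  calc ∑ τ ∈ sieveIndex y R with sieveIndexModulus τ = q, 1 / (Nat.totient τ.2.1 : ℝ)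
      = ∑ σ ∈ Finset.image forget (Finset.filter (sieveIndexModulus · = q) (sieveIndex y R)),
          1 / (Nat.totient σ.2 : ℝ) :=
        (Finset.sum_image (f := fun σ : (ℕ × ℕ) × ℕ => 1 / (Nat.totient σ.2 : ℝ)) inj).symm
    _ ≤ ∑ σ ∈ (q.divisors ×ˢ q.divisors) ×ˢ sieveModuli y R, 1 / (Nat.totient σ.2 : ℝ) :=
        Finset.sum_le_sum_of_subset_of_nonneg maps fun _ _ _ => by positivity
    _ = (q.divisors.card : ℝ) ^ 2 * sieveMass y R := by
        simp only [Finset.sum_product, Finset.sum_const, Finset.card_product, nsmul_eq_mul,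
          sieveMass]
        push_cast
        ring

lemma abs_sieveCoeff_le {q : ℕ} (hR : 1 ≤ R) (hq : q ≠ 0) :
    |sieveCoeff y R q| ≤ (q.divisors.card : ℝ) ^ 2 * (1 / Nat.totient q) := by
  have mass_pos : 0 < sieveMass y R := one_pos.trans_le (one_le_sieveMass y hR)
  rw [sieveCoeff, abs_div, abs_of_pos mass_pos, div_le_iff₀ mass_pos]
  calc |∑ τ ∈ sieveIndex y R with sieveIndexModulus τ = q, sieveIndexWeight τ|
      ≤ ∑ τ ∈ sieveIndex y R with sieveIndexModulus τ = q,
          1 / (Nat.totient q : ℝ) * (1 / (Nat.totient τ.2.1 : ℝ)) := by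
        refine (Finset.abs_sum_le_sum_abs _ _).trans (Finset.sum_le_sum fun τ hτ => ?_)
        obtain ⟨mem, rfl⟩ := Finset.mem_filter.1 hτ
        exact abs_sieveIndexWeight_le mem
    _ ≤ 1 / (Nat.totient q : ℝ) * ((q.divisors.card : ℝ) ^ 2 * sieveMass y R) := by
        rw [← Finset.mul_sum]
        gcongr
        exact sum_sieveIndex_modulus_eq_le hq
    _ = (q.divisors.card : ℝ) ^ 2 * (1 / Nat.totient q) * sieveMass y R := by ring

theorem exists_abs_sieveCoeff_le {ε : ℝ} (hε : 0 < ε) :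
    ∃ C : ℝ, 1 ≤ C ∧ ∀ y R q : ℕ, 1 ≤ R → Squarefree q →
      |sieveCoeff y R q| ≤ C * (q : ℝ) ^ (ε - 1) := by
  obtain ⟨C, hC, card_divisors_le⟩ := exists_card_divisors_le_rpow (ε := ε / 3) (by positivity)
  refine ⟨C ^ 3, one_le_pow₀ hC, fun y R q hR hq => (abs_sieveCoeff_le hR hq.ne_zero).trans ?_⟩
  have hq0 : (0 : ℝ) < q := by exact_mod_cast hq.ne_zero.bot_lt
  have hφ : (0 : ℝ) < Nat.totient q := by exact_mod_cast Nat.totient_pos.2 hq.ne_zero.bot_lt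
  calc (q.divisors.card : ℝ) ^ 2 * (1 / Nat.totient q)
      ≤ (q.divisors.card : ℝ) ^ 2 * (q.divisors.card / q) := by
        gcongr ?_ * ?_
        rw [div_le_div_iff₀ hφ hq0, one_mul, mul_comm]
        exact le_totient_mul_card_divisors hq
    _ = (q.divisors.card : ℝ) ^ 3 * (q : ℝ)⁻¹ := by ring
    _ ≤ (C * (q : ℝ) ^ (ε / 3)) ^ 3 * (q : ℝ)⁻¹ := by
        gcongr
        exact card_divisors_le q hq.ne_zero
    _ = C ^ 3 * (q : ℝ) ^ (ε - 1) := by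
        rw [mul_pow, ← Real.rpow_mul_natCast hq0.le, mul_assoc, ← Real.rpow_neg_one,
          ← Real.rpow_add hq0]
        congr 2
        push_cast
        ring

lemma coprime_subset_image_sq_mul (y R : ℕ) :
    (Finset.Icc 1 R).filter (Nat.Coprime y) ⊆
      (Finset.Ioo 0 (R + 1) ×ˢ sieveModuli y R).image fun x => x.1 ^ 2 * x.2 := by
  intro n hn
  obtain ⟨hn, coprime⟩ := Finset.mem_filter.1 hn
  obtain ⟨hn1, hnR⟩ := Finset.mem_Icc.1 hn
  obtain ⟨m, k, hm, hk, rfl, squarefree⟩ := Nat.sq_mul_squarefree_of_pos hn1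
  have k_le : k ≤ k ^ 2 * m := (Nat.le_self_pow two_ne_zero k).trans (Nat.le_mul_of_pos_right _ hm)
  exact Finset.mem_image.2 ⟨(k, m), Finset.mem_product.2
    ⟨Finset.mem_Ioo.2 ⟨hk, Nat.lt_succ_of_le (k_le.trans hnR)⟩,
      mem_sieveModuli.2 ⟨⟨hm, (Nat.le_of_dvd hn1 (dvd_mul_left _ _)).trans hnR⟩, squarefree,
        (coprime.coprime_dvd_right (dvd_mul_left _ _)).symm⟩⟩, rfl⟩

lemma sum_inv_coprime_le_sieveMass (y R : ℕ) :
    ∑ n ∈ Finset.Icc 1 R with Nat.Coprime y n, 1 / (n : ℝ) ≤ 2 * sieveMass y R :=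
  calc ∑ n ∈ Finset.Icc 1 R with Nat.Coprime y n, 1 / (n : ℝ)
      ≤ ∑ n ∈ (Finset.Ioo 0 (R + 1) ×ˢ sieveModuli y R).image (fun x : ℕ × ℕ => x.1 ^ 2 * x.2),
          1 / (n : ℝ) :=
        Finset.sum_le_sum_of_subset_of_nonneg (coprime_subset_image_sq_mul y R)
          fun _ _ _ => by positivity
    _ ≤ ∑ x ∈ Finset.Ioo 0 (R + 1) ×ˢ sieveModuli y R, 1 / ((x.1 ^ 2 * x.2 : ℕ) : ℝ) :=
        Finset.sum_image_le_of_nonneg fun _ _ => by positivity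
    _ = (∑ k ∈ Finset.Ioo 0 (R + 1), ((k : ℝ) ^ 2)⁻¹) * ∑ m ∈ sieveModuli y R, 1 / (m : ℝ) := by
        rw [Finset.sum_mul_sum, Finset.sum_product]
        refine Finset.sum_congr rfl fun k _ => Finset.sum_congr rfl fun m _ => ?_
        push_cast
        rw [one_div, mul_inv, one_div]
    _ ≤ 2 * sieveMass y R := by
        gcongr
        · simpa using sum_Ioo_inv_sq_le (α := ℝ) 0 (R + 1)
        · refine Finset.sum_le_sum fun m hm => ?_
          have : (0 : ℝ) < Nat.totient m := by
            exact_mod_cast Nat.totient_pos.2 (mem_sieveModuli.1 hm).1.1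
          gcongr
          exact Nat.totient_le m

lemma totient_mul_inv_le_sum_inv_coprime (y K : ℕ) :
    (Nat.totient y : ℝ) * (1 / ((K * y + y : ℕ) : ℝ)) ≤
      ∑ n ∈ Finset.Ico (K * y + 1) (K * y + 1 + y) with Nat.Coprime y n, 1 / (n : ℝ) := by
  rw [← Nat.filter_coprime_Ico_eq_totient y (K * y + 1), ← nsmul_eq_mul]
  refine Finset.card_nsmul_le_sum _ _ _ fun n hn => ?_
  obtain ⟨lower, upper⟩ := Finset.mem_Ico.1 (Finset.mem_filter.1 hn).1
  have : 0 < n := by omega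
  gcongr
  omega

lemma totient_mul_harmonic_le_sum_inv_coprime {y : ℕ} (hy : y ≠ 0) (K : ℕ) :
    (Nat.totient y : ℝ) / y * (harmonic K : ℚ) ≤
      ∑ n ∈ Finset.Ico 1 (K * y + 1) with Nat.Coprime y n, 1 / (n : ℝ) := by
  induction K with
  | zero => simp
  | succ K ih =>
    have split := Finset.sum_Ico_consecutive (fun n => if Nat.Coprime y n then 1 / (n : ℝ) else 0)
      (Nat.le_add_left 1 (K * y)) (Nat.le_add_right (K * y + 1) y)
    simp only [← Finset.sum_filter] at split
    rw [Nat.succ_mul, add_right_comm, ← split]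
    refine le_trans (le_of_eq ?_) (add_le_add ih (totient_mul_inv_le_sum_inv_coprime y K))
    rw [harmonic_succ]
    push_cast
    field_simp

lemma totient_mul_log_le_sum_inv_coprime {y : ℕ} (hy : y ≠ 0) (R : ℕ) :
    (Nat.totient y : ℝ) / y * Real.log ((R / y + 1 : ℕ) : ℝ) ≤
      ∑ n ∈ Finset.Icc 1 R with Nat.Coprime y n, 1 / (n : ℝ) :=
  calc (Nat.totient y : ℝ) / y * Real.log ((R / y + 1 : ℕ) : ℝ)
      ≤ (Nat.totient y : ℝ) / y * (harmonic (R / y) : ℚ) := by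
        gcongr
        exact log_add_one_le_harmonic _
    _ ≤ ∑ n ∈ Finset.Ico 1 (R / y * y + 1) with Nat.Coprime y n, 1 / (n : ℝ) :=
        totient_mul_harmonic_le_sum_inv_coprime hy _
    _ ≤ ∑ n ∈ Finset.Icc 1 R with Nat.Coprime y n, 1 / (n : ℝ) := by
        refine Finset.sum_le_sum_of_subset_of_nonneg ?_ fun _ _ _ => by positivity
        exact Finset.filter_subset_filter _ (Finset.Ico_subset_Ico_right
          (Nat.succ_le_succ (Nat.div_mul_le_self R y)))

theorem totient_mul_log_le_sieveMass (hy : y ≠ 0) (hR : y ^ 2 ≤ R) :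
    (Nat.totient y : ℝ) / y * Real.log (R + 1) ≤ 4 * sieveMass y R := by
  have hy' : 0 < y := hy.bot_lt
  have R_lt : R + 1 ≤ (R / y + 1) ^ 2 :=
    calc R + 1 ≤ (R / y + 1) * y := by rw [add_mul, one_mul]; exact Nat.lt_div_mul_add hy'
      _ ≤ (R / y + 1) ^ 2 := by
        rw [sq]
        have : y ≤ R / y := (Nat.le_div_iff_mul_le hy').2 ((sq y).symm.trans_le hR)
        gcongr
        omega
  calc (Nat.totient y : ℝ) / y * Real.log (R + 1)
      ≤ (Nat.totient y : ℝ) / y * (2 * Real.log ((R / y + 1 : ℕ) : ℝ)) := by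
        rw [← Nat.cast_ofNat (R := ℝ), ← Real.log_pow]
        gcongr
        exact_mod_cast R_lt
    _ = 2 * ((Nat.totient y : ℝ) / y * Real.log ((R / y + 1 : ℕ) : ℝ)) := by ring
    _ ≤ 2 * (2 * sieveMass y R) := by
        gcongr ?_ * ?_
        exact (totient_mul_log_le_sum_inv_coprime hy R).trans (sum_inv_coprime_le_sieveMass y R)
    _ = 4 * sieveMass y R := by ring

end SelbergMajorant

section ExponentialSums

lemma norm_one_sub_pow_le {ζ : ℂ} (hζ : ‖ζ‖ = 1) (k : ℕ) : ‖1 - ζ ^ k‖ ≤ k * ‖1 - ζ‖ := by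
  rw [← norm_neg, neg_sub, ← geom_sum_mul, norm_mul, norm_sub_rev ζ]
  gcongr
  exact (norm_sum_le _ _).trans_eq (by simp [hζ])

lemma inv_le_norm_one_sub_of_pow_eq_one {ζ : ℂ} {D : ℕ} (hD : 0 < D) (h : ζ ^ D = 1)
    (hne : ζ ≠ 1) : 1 / (D : ℝ) ≤ ‖1 - ζ‖ := by
  have sum_eq_zero : ∑ k ∈ Finset.range D, ζ ^ k = 0 := by
    rw [geom_sum_eq hne, h, sub_self, zero_div]
  have hD0 : (0 : ℝ) < D := by exact_mod_cast hD
  have key : (D : ℝ) * 1 ≤ D * (D * ‖1 - ζ‖) :=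
    calc (D : ℝ) * 1 = ‖∑ k ∈ Finset.range D, (1 - ζ ^ k)‖ := by
          simp [Finset.sum_sub_distrib, sum_eq_zero]
      _ ≤ ∑ k ∈ Finset.range D, ‖1 - ζ ^ k‖ := norm_sum_le _ _
      _ ≤ ∑ _k ∈ Finset.range D, D * ‖1 - ζ‖ := by
          refine Finset.sum_le_sum fun k hk =>
            (norm_one_sub_pow_le (Complex.norm_eq_one_of_pow_eq_one h hD.ne') k).trans ?_
          have := (Finset.mem_range.1 hk).le
          gcongr
      _ = D * (D * ‖1 - ζ‖) := by simp
  exact (div_le_iff₀' hD0).2 (le_of_mul_le_mul_left key hD0)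

lemma norm_geom_sum_le_card {w : ℂ} (hw : ‖w‖ = 1) (L : ℕ) :
    ‖∑ m ∈ Finset.range L, w ^ m‖ ≤ L :=
  (norm_sum_le _ _).trans_eq (by simp [hw])

lemma norm_geom_sum_le_div {w : ℂ} (hw : ‖w‖ = 1) (L : ℕ) {η : ℝ} (hη : 0 < η)
    (h : η ≤ ‖1 - w‖) : ‖∑ m ∈ Finset.range L, w ^ m‖ ≤ 2 / η := by
  rw [le_div_iff₀ hη]
  calc ‖∑ m ∈ Finset.range L, w ^ m‖ * η
      ≤ ‖∑ m ∈ Finset.range L, w ^ m‖ * ‖w - 1‖ := by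
        gcongr
        rwa [norm_sub_rev]
    _ = ‖w ^ L - 1‖ := by rw [← norm_mul, geom_sum_mul]
    _ ≤ ‖w ^ L‖ + ‖(1 : ℂ)‖ := norm_sub_le _ _
    _ = 2 := by rw [norm_pow, hw, one_pow, norm_one, one_add_one_eq_two]

-- At most one of the separated points lies within `η` of `1`.
lemma sum_norm_geom_sum_le_of_separated {ι : Type*} (Z : Finset ι) (w : ι → ℂ) {η : ℝ}
    (hη : 0 < η) (hw : ∀ i ∈ Z, ‖w i‖ = 1)
    (separated : ∀ i ∈ Z, ∀ j ∈ Z, i ≠ j → 2 * η ≤ ‖w i - w j‖) (L : ℕ) :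
    ∑ i ∈ Z, ‖∑ m ∈ Finset.range L, w i ^ m‖ ≤ L + Z.card * (2 / η) := by
  classical
  have sum_le {S : Finset ι} (hS : S ⊆ Z) (far : ∀ i ∈ S, η ≤ ‖1 - w i‖) :
      ∑ i ∈ S, ‖∑ m ∈ Finset.range L, w i ^ m‖ ≤ Z.card * (2 / η) :=
    calc ∑ i ∈ S, ‖∑ m ∈ Finset.range L, w i ^ m‖ ≤ S.card • (2 / η) :=
          Finset.sum_le_card_nsmul _ _ _ fun i hi =>
            norm_geom_sum_le_div (hw i (hS hi)) L hη (far i hi)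
      _ ≤ Z.card * (2 / η) := by
          rw [nsmul_eq_mul]
          gcongr
  by_cases near : ∃ i ∈ Z, ‖1 - w i‖ < η
  · obtain ⟨i, hi, hlt⟩ := near
    rw [← Finset.add_sum_erase _ _ hi]
    refine add_le_add (norm_geom_sum_le_card (hw i hi) L)
      (sum_le (Finset.erase_subset _ _) fun j hj => ?_)
    obtain ⟨hne, hj⟩ := Finset.mem_erase.1 hj
    have triangle := norm_sub_le_norm_sub_add_norm_sub (w i) 1 (w j)
    have := separated i hi j hj hne.symm
    rw [norm_sub_rev (w i) 1] at triangle
    linarith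
  · push Not at near
    exact (sum_le subset_rfl near).trans (le_add_of_nonneg_left L.cast_nonneg)

lemma exists_residueWindow_eq_image {N y : ℕ} (hy : 1 ≤ y) (hyN : y ≤ N) (b : ℤ) :
    ∃ b' L : ℕ, (L : ℝ) ≤ 2 * (N / y) ∧
      residueWindow N y b = (Finset.range L).image (fun m => b' + y * m) := by
  obtain ⟨b', hb'⟩ := Int.eq_ofNat_of_zero_le (Int.emod_nonneg b (by omega : (y : ℤ) ≠ 0))
  have hlt : b' < y := by
    have := Int.emod_lt_of_pos b (by omega : (0 : ℤ) < y)
    omega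
  refine ⟨b', (N - b' + y - 1) / y, ?_, ?_⟩
  · have length_mul_le : (N - b' + y - 1) / y * y ≤ 2 * N :=
      (Nat.div_mul_le_self _ _).trans (by omega)
    rw [← mul_div_assoc, le_div_iff₀ (by exact_mod_cast hy)]
    exact_mod_cast length_mul_le
  · have lt_length_iff (m : ℕ) : m < (N - b' + y - 1) / y ↔ b' + y * m < N := by
      rw [← Nat.succ_le_iff, Nat.le_div_iff_mul_le hy, Nat.succ_mul, mul_comm m y]
      omega
    ext n
    simp only [residueWindow, Finset.mem_filter, Finset.mem_range, Finset.mem_image, hb']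
    constructor
    · rintro ⟨hn, hmod⟩
      have mod_eq : n % y = b' := by exact_mod_cast hmod
      refine ⟨n / y, (lt_length_iff _).2 ?_, ?_⟩ <;> rw [← mod_eq, Nat.mod_add_div]
      exact hn
    · rintro ⟨m, hm, rfl⟩
      have mod_eq : (b' + y * m) % y = b' := by
        rw [Nat.add_mul_mod_self_left, Nat.mod_eq_of_lt hlt]
      exact ⟨(lt_length_iff _).1 hm, by exact_mod_cast mod_eq⟩

section Farey

variable {D y : ℕ}

lemma norm_eq_one_of_mem_primitiveRoots {q : ℕ} {z : ℂ} (hq : q ∈ sieveModuli y D)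
    (hz : z ∈ primitiveRoots q ℂ) : ‖z‖ = 1 :=
  (isPrimitiveRoot_of_mem_primitiveRoots hz).norm'_eq_one
    (Nat.one_le_iff_ne_zero.1 (mem_sieveModuli.1 hq).1.1)

lemma inv_sq_le_norm_pow_sub_pow {q q' : ℕ} {z z' : ℂ} (hq : q ∈ sieveModuli y D)
    (hq' : q' ∈ sieveModuli y D) (hz : z ∈ primitiveRoots q ℂ) (hz' : z' ∈ primitiveRoots q' ℂ)
    (hne : z ≠ z') : 1 / (D : ℝ) ^ 2 ≤ ‖z ^ y - z' ^ y‖ := by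
  obtain ⟨⟨hq1, hqD⟩, -, hqy⟩ := mem_sieveModuli.1 hq
  obtain ⟨⟨hq1', hqD'⟩, -, hqy'⟩ := mem_sieveModuli.1 hq'
  have norm_z' := norm_eq_one_of_mem_primitiveRoots hq' hz'
  have hz'0 : z' ≠ 0 := norm_ne_zero_iff.1 (norm_z'.symm ▸ one_ne_zero)
  have ratio_pow : (z / z') ^ (q * q') = 1 := by
    rw [div_pow, pow_mul, (isPrimitiveRoot_of_mem_primitiveRoots hz).pow_eq_one, mul_comm q,
      pow_mul, (isPrimitiveRoot_of_mem_primitiveRoots hz').pow_eq_one, one_pow, one_pow, div_one]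
  have ratio_pow_y_ne_one : (z / z') ^ y ≠ 1 := fun h => by
    have order_dvd := Nat.dvd_gcd (orderOf_dvd_of_pow_eq_one ratio_pow)
      (orderOf_dvd_of_pow_eq_one h)
    rw [(hqy.mul_left hqy').gcd_eq_one, Nat.dvd_one, orderOf_eq_one_iff,
      div_eq_one_iff_eq hz'0] at order_dvd
    exact hne order_dvd
  have pos : 0 < q * q' := Nat.mul_pos hq1 hq1'
  calc 1 / (D : ℝ) ^ 2 ≤ 1 / ((q * q' : ℕ) : ℝ) := by
        refine one_div_le_one_div_of_le (by exact_mod_cast pos) ?_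
        rw [sq]
        exact_mod_cast Nat.mul_le_mul hqD hqD'
    _ ≤ ‖1 - (z / z') ^ y‖ := inv_le_norm_one_sub_of_pow_eq_one pos
        (by rw [← pow_mul, mul_comm, pow_mul, ratio_pow, one_pow]) ratio_pow_y_ne_one
    _ = ‖z' ^ y * (1 - (z / z') ^ y)‖ := by rw [norm_mul, norm_pow, norm_z', one_pow, one_mul]
    _ = ‖z ^ y - z' ^ y‖ := by
        rw [mul_sub, mul_one, ← mul_pow, mul_div_cancel₀ _ hz'0, norm_sub_rev]

lemma card_biUnion_primitiveRoots_le {𝓠 : Finset ℕ} (h𝓠 : 𝓠 ⊆ sieveModuli y D) :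
    (𝓠.biUnion fun q => primitiveRoots q ℂ).card ≤ D ^ 2 :=
  calc (𝓠.biUnion fun q => primitiveRoots q ℂ).card ≤ 𝓠.card * D := by
        refine Finset.card_biUnion_le_card_mul _ _ _ fun q hq => ?_
        rw [Complex.card_primitiveRoots]
        exact (Nat.totient_le q).trans (mem_sieveModuli.1 (h𝓠 hq)).1.2
    _ ≤ D * D := by
        gcongr
        exact (Finset.card_le_card (h𝓠.trans (Finset.filter_subset _ _))).trans_eq (by simp)
    _ = D ^ 2 := (sq D).symm

lemma sum_norm_geom_sum_primitiveRoots_le {𝓠 : Finset ℕ} (h𝓠 : 𝓠 ⊆ sieveModuli y D) {u : ℂ}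
    (hu : ‖u‖ = 1) (L : ℕ) :
    ∑ q ∈ 𝓠, ∑ z ∈ primitiveRoots q ℂ, ‖∑ m ∈ Finset.range L, ((z * u) ^ y) ^ m‖ ≤
      L + 4 * (D : ℝ) ^ 4 := by
  rcases Nat.eq_zero_or_pos D with rfl | hD
  · simp [Finset.subset_empty.1 (h𝓠.trans_eq (by simp [sieveModuli]) : 𝓠 ⊆ ∅)]
  have : (0 : ℝ) < D := by exact_mod_cast hD
  rw [← Finset.sum_biUnion fun i _ j _ hij => IsPrimitiveRoot.disjoint hij]
  refine (sum_norm_geom_sum_le_of_separated _ (fun z => (z * u) ^ y)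
    (η := 1 / (2 * (D : ℝ) ^ 2)) (by positivity) ?_ ?_ L).trans ?_
  · intro z hz
    obtain ⟨q, hq, hz⟩ := Finset.mem_biUnion.1 hz
    rw [norm_pow, norm_mul, norm_eq_one_of_mem_primitiveRoots (h𝓠 hq) hz, hu, mul_one, one_pow]
  · intro z hz z' hz' hne
    obtain ⟨q, hq, hz⟩ := Finset.mem_biUnion.1 hz
    obtain ⟨q', hq', hz'⟩ := Finset.mem_biUnion.1 hz'
    calc 2 * (1 / (2 * (D : ℝ) ^ 2)) = 1 / (D : ℝ) ^ 2 := by field_simp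
      _ ≤ ‖z ^ y - z' ^ y‖ := inv_sq_le_norm_pow_sub_pow (h𝓠 hq) (h𝓠 hq') hz hz' hne
      _ = ‖(z * u) ^ y - (z' * u) ^ y‖ := by
        rw [mul_pow, mul_pow, ← sub_mul, norm_mul, norm_pow u, hu, one_pow, mul_one]
  · gcongr L + ?_
    calc _ ≤ (D : ℝ) ^ 2 * (2 / (1 / (2 * (D : ℝ) ^ 2))) := by
          gcongr
          exact_mod_cast card_biUnion_primitiveRoots_le h𝓠
      _ = 4 * (D : ℝ) ^ 4 := by
          field_simp
          norm_num

lemma sum_residueWindow_ramanujanSum_mul_pow {N y b' L : ℕ} {b : ℤ} (hy : y ≠ 0)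
    (window : residueWindow N y b = (Finset.range L).image fun m => b' + y * m)
    {𝓠 : Finset ℕ} (h𝓠 : 𝓠 ⊆ sieveModuli y D) (v : ℕ → ℝ) (u : ℂ) :
    ∑ n ∈ residueWindow N y b, ((∑ q ∈ 𝓠, v q * ramanujanSum n q : ℝ) : ℂ) * u ^ n =
      ∑ q ∈ 𝓠, ∑ z ∈ primitiveRoots q ℂ, (v q : ℂ) *
        ((z * u) ^ b' * ∑ m ∈ Finset.range L, ((z * u) ^ y) ^ m) := by
  rw [window, Finset.sum_image fun m _ m' _ h => mul_left_cancel₀ hy (Nat.add_left_cancel h)]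
  push_cast
  simp_rw [Finset.sum_mul, Finset.mul_sum]
  rw [Finset.sum_comm]
  refine Finset.sum_congr rfl fun q hq => ?_
  rw [Finset.sum_comm]
  refine Finset.sum_congr rfl fun m _ => ?_
  rw [ramanujanSum_eq_sum_primitiveRoots (mem_sieveModuli.1 (h𝓠 hq)).1.1, Finset.mul_sum,
    Finset.sum_mul]
  refine Finset.sum_congr rfl fun z _ => ?_
  rw [← pow_mul, ← pow_add, mul_pow]
  ring

theorem norm_sum_ramanujanSum_mul_pow_le {N : ℕ} (hy : 1 ≤ y) (hyN : y ≤ N) (b : ℤ)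
    {𝓠 : Finset ℕ} (h𝓠 : 𝓠 ⊆ sieveModuli y D) (v : ℕ → ℝ) {V : ℝ} (hV : 0 ≤ V)
    (hv : ∀ q ∈ 𝓠, |v q| ≤ V) {u : ℂ} (hu : ‖u‖ = 1) :
    ‖∑ n ∈ residueWindow N y b, ((∑ q ∈ 𝓠, v q * ramanujanSum n q : ℝ) : ℂ) * u ^ n‖ ≤
      V * (2 * (N / y) + 4 * (D : ℝ) ^ 4) := by
  obtain ⟨b', L, hL, window⟩ := exists_residueWindow_eq_image hy hyN b
  rw [sum_residueWindow_ramanujanSum_mul_pow (Nat.one_le_iff_ne_zero.1 hy) window h𝓠]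
  calc ‖∑ q ∈ 𝓠, ∑ z ∈ primitiveRoots q ℂ, (v q : ℂ) *
          ((z * u) ^ b' * ∑ m ∈ Finset.range L, ((z * u) ^ y) ^ m)‖
      ≤ ∑ q ∈ 𝓠, ∑ z ∈ primitiveRoots q ℂ,
          V * ‖∑ m ∈ Finset.range L, ((z * u) ^ y) ^ m‖ := by
        refine norm_sum_le_of_le _ fun q hq => norm_sum_le_of_le _ fun z hz => ?_
        rw [norm_mul, norm_mul, norm_pow, norm_mul,
          norm_eq_one_of_mem_primitiveRoots (h𝓠 hq) hz, hu, mul_one, one_pow, one_mul,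
          Complex.norm_real, Real.norm_eq_abs]
        gcongr
        exact hv q hq
    _ = V * ∑ q ∈ 𝓠, ∑ z ∈ primitiveRoots q ℂ,
          ‖∑ m ∈ Finset.range L, ((z * u) ^ y) ^ m‖ := by
        simp_rw [Finset.mul_sum]
    _ ≤ V * (L + 4 * (D : ℝ) ^ 4) := by
        gcongr
        exact sum_norm_geom_sum_primitiveRoots_le h𝓠 hu L
    _ ≤ V * (2 * (N / y) + 4 * (D : ℝ) ^ 4) := by gcongr

end Farey

end ExponentialSums

section RamanujanMoments

variable {D N y : ℕ}

/-- The divisors of `n` up to `D` that are coprime to `y`. -/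
def smallDivisors (D y n : ℕ) : Finset ℕ :=
  (Finset.Icc 1 D).filter fun d => Nat.Coprime d y ∧ d ∣ n

lemma mem_smallDivisors {n d : ℕ} :
    d ∈ smallDivisors D y n ↔ (1 ≤ d ∧ d ≤ D) ∧ Nat.Coprime d y ∧ d ∣ n := by
  simp [smallDivisors]

lemma card_sieveModuli_filter_dvd_le (D y d : ℕ) :
    ((sieveModuli y D).filter (d ∣ ·)).card ≤ D / d := by
  rw [← Nat.Ioc_filter_dvd_card_eq_div]
  exact Finset.card_le_card (Finset.filter_subset_filter _ (Finset.filter_subset _ _))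

lemma abs_ramanujanSum_le_sum_smallDivisors {q : ℕ} (hq : q ∈ sieveModuli y D) (n : ℕ) :
    |ramanujanSum n q| ≤ ∑ d ∈ smallDivisors D y n, if d ∣ q then (d : ℝ) else 0 := by
  obtain ⟨⟨hq1, hqD⟩, -, hqy⟩ := mem_sieveModuli.1 hq
  refine (abs_ramanujanSum_le q n).trans ?_
  rw [← Finset.sum_filter, ← Finset.sum_filter]
  refine Finset.sum_le_sum_of_subset_of_nonneg (fun d hd => ?_) fun _ _ _ => by positivity
  obtain ⟨hd, hdn⟩ := Finset.mem_filter.1 hd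
  have hdq := Nat.dvd_of_mem_divisors hd
  exact Finset.mem_filter.2 ⟨mem_smallDivisors.2 ⟨⟨Nat.pos_of_mem_divisors hd,
    (Nat.le_of_dvd hq1 hdq).trans hqD⟩, hqy.coprime_dvd_left hdq, hdn⟩, hdq⟩

lemma abs_sum_ramanujanSum_le {𝓠 : Finset ℕ} (h𝓠 : 𝓠 ⊆ sieveModuli y D) (v : ℕ → ℝ)
    {V : ℝ} (hV : 0 ≤ V) (hv : ∀ q ∈ 𝓠, |v q| ≤ V) (n : ℕ) :
    |∑ q ∈ 𝓠, v q * ramanujanSum n q| ≤ V * D * (smallDivisors D y n).card := by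
  calc |∑ q ∈ 𝓠, v q * ramanujanSum n q|
      ≤ ∑ q ∈ 𝓠, V * ∑ d ∈ smallDivisors D y n, if d ∣ q then (d : ℝ) else 0 := by
        refine (Finset.abs_sum_le_sum_abs _ _).trans (Finset.sum_le_sum fun q hq => ?_)
        rw [abs_mul]
        exact mul_le_mul (hv q hq) (abs_ramanujanSum_le_sum_smallDivisors (h𝓠 hq) n)
          (abs_nonneg _) hV
    _ = V * ∑ d ∈ smallDivisors D y n, ((𝓠.filter (d ∣ ·)).card : ℝ) * d := by
        rw [← Finset.mul_sum, Finset.sum_comm]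
        simp only [← Finset.sum_filter, Finset.sum_const, nsmul_eq_mul]
    _ ≤ V * ∑ _d ∈ smallDivisors D y n, (D : ℝ) := by
        gcongr
        exact_mod_cast (Nat.mul_le_mul_right d ((Finset.card_le_card
          (Finset.filter_subset_filter _ h𝓠)).trans (card_sieveModuli_filter_dvd_le D y d))).trans
            (Nat.div_mul_le_self D d)
    _ = V * D * (smallDivisors D y n).card := by
        rw [Finset.sum_const, nsmul_eq_mul]
        ring

lemma lcm_mem_smallDivisors {n p : ℕ} {t : Fin p → ℕ} (ht : ∀ i, t i ∈ smallDivisors D y n) :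
    Finset.univ.lcm t ∈ smallDivisors (D ^ p) y n := by
  have lcm_dvd_prod : Finset.univ.lcm t ∣ ∏ i, t i :=
    Finset.lcm_dvd fun i hi => Finset.dvd_prod_of_mem _ hi
  have prod_pos : 0 < ∏ i, t i := Finset.prod_pos fun i _ => (mem_smallDivisors.1 (ht i)).1.1
  refine mem_smallDivisors.2 ⟨⟨Nat.pos_of_dvd_of_pos lcm_dvd_prod prod_pos, ?_⟩,
    (Nat.Coprime.prod_left fun i _ => (mem_smallDivisors.1 (ht i)).2.1).coprime_dvd_left
      lcm_dvd_prod, Finset.lcm_dvd fun i _ => (mem_smallDivisors.1 (ht i)).2.2⟩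
  calc Finset.univ.lcm t ≤ ∏ i, t i := Nat.le_of_dvd prod_pos lcm_dvd_prod
    _ ≤ ∏ _i : Fin p, D := Finset.prod_le_prod' fun i _ => (mem_smallDivisors.1 (ht i)).1.2
    _ = D ^ p := by simp

-- A `p`-tuple of small divisors of `n` is a `p`-tuple of divisors of its least common multiple.
lemma card_smallDivisors_pow_le (D y n p : ℕ) :
    (smallDivisors D y n).card ^ p ≤ ∑ m ∈ smallDivisors (D ^ p) y n, m.divisors.card ^ p := by
  let tuples := Fintype.piFinset fun _ : Fin p => smallDivisors D y n
  calc (smallDivisors D y n).card ^ p = tuples.card := by simp [tuples]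
    _ = ∑ m ∈ smallDivisors (D ^ p) y n, (tuples.filter (Finset.univ.lcm · = m)).card :=
        Finset.card_eq_sum_card_fiberwise fun t ht =>
          lcm_mem_smallDivisors (Fintype.mem_piFinset.1 ht)
    _ ≤ ∑ m ∈ smallDivisors (D ^ p) y n,
          (Fintype.piFinset fun _ : Fin p => m.divisors).card := by
        refine Finset.sum_le_sum fun m hm => Finset.card_le_card fun t ht => ?_
        obtain ⟨-, rfl⟩ := Finset.mem_filter.1 ht
        exact Fintype.mem_piFinset.2 fun i => Nat.mem_divisors.2
          ⟨Finset.dvd_lcm (Finset.mem_univ i),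
            Nat.one_le_iff_ne_zero.1 (mem_smallDivisors.1 hm).1.1⟩
    _ = ∑ m ∈ smallDivisors (D ^ p) y n, m.divisors.card ^ p := by simp

lemma card_residueWindow_filter_dvd_le {m : ℕ} (N : ℕ) (b : ℤ) (hm : Nat.Coprime m y) :
    ((residueWindow N y b).filter (m ∣ ·)).card ≤ N / (m * y) + 1 := by
  have inj : Set.InjOn (· / (m * y)) ((residueWindow N y b).filter (m ∣ ·) : Set ℕ) := by
    intro n hn n' hn' hdiv
    obtain ⟨hn, hd⟩ := Finset.mem_filter.1 hn
    obtain ⟨hn', hd'⟩ := Finset.mem_filter.1 hn'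
    have modEq_y : n ≡ n' [MOD y] := by
      have := (Finset.mem_filter.1 hn).2.trans (Finset.mem_filter.1 hn').2.symm
      exact_mod_cast this
    have modEq_m : n ≡ n' [MOD m] :=
      ((Nat.modEq_zero_iff_dvd).2 hd).trans ((Nat.modEq_zero_iff_dvd).2 hd').symm
    have mod_eq : n % (m * y) = n' % (m * y) :=
      (Nat.modEq_and_modEq_iff_modEq_mul hm).1 ⟨modEq_m, modEq_y⟩
    rw [← Nat.div_add_mod n (m * y), ← Nat.div_add_mod n' (m * y), mod_eq]
    exact congrArg (m * y * · + n' % (m * y)) hdiv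
  rw [← Finset.card_range (N / (m * y) + 1)]
  refine Finset.card_le_card_of_injOn _ (fun n hn => ?_) inj
  have hnN := Finset.mem_range.1 (Finset.mem_filter.1 (Finset.mem_filter.1 hn).1).1
  exact Finset.mem_range.2 (Nat.lt_succ_of_le (Nat.div_le_div_right hnN.le))

lemma cast_card_residueWindow_filter_dvd_le {m : ℕ} (b : ℤ) (hm0 : 0 < m)
    (hm : Nat.Coprime m y) (hmN : (m : ℝ) ≤ N / y) :
    (((residueWindow N y b).filter (m ∣ ·)).card : ℝ) ≤ 2 * (N / y) / m := by
  have hm0' : (0 : ℝ) < m := by exact_mod_cast hm0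
  calc (((residueWindow N y b).filter (m ∣ ·)).card : ℝ) ≤ ((N / (m * y) + 1 : ℕ) : ℝ) := by
        exact_mod_cast card_residueWindow_filter_dvd_le N b hm
    _ ≤ (N : ℝ) / ((m * y : ℕ) : ℝ) + 1 := by
        push_cast [← Nat.cast_mul]
        gcongr
        exact Nat.cast_div_le
    _ ≤ (N : ℝ) / ((m * y : ℕ) : ℝ) + (N / y) / m := by
        gcongr
        rwa [le_div_iff₀ hm0', one_mul]
    _ = 2 * (N / y) / m := by
        push_cast
        rw [mul_comm (m : ℝ), ← div_div]
        ring

lemma sum_card_smallDivisors_pow_le {p : ℕ} (b : ℤ) (hD : (D : ℝ) ^ p ≤ N / y) :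
    ∑ n ∈ residueWindow N y b, ((smallDivisors D y n).card : ℝ) ^ p ≤
      2 * (N / y) * ∑ m ∈ Finset.Icc 1 (D ^ p), (m.divisors.card : ℝ) ^ p / m := by
  calc ∑ n ∈ residueWindow N y b, ((smallDivisors D y n).card : ℝ) ^ p
      ≤ ∑ n ∈ residueWindow N y b, ∑ m ∈ smallDivisors (D ^ p) y n,
          (m.divisors.card : ℝ) ^ p := by
        refine Finset.sum_le_sum fun n _ => ?_
        exact_mod_cast card_smallDivisors_pow_le D y n p
    _ = ∑ m ∈ Finset.Icc 1 (D ^ p) with Nat.Coprime m y,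
          ∑ n ∈ residueWindow N y b with m ∣ n, (m.divisors.card : ℝ) ^ p := by
        refine Finset.sum_comm' fun n m => ?_
        simp only [mem_smallDivisors, Finset.mem_filter, Finset.mem_Icc]
        tauto
    _ ≤ ∑ m ∈ Finset.Icc 1 (D ^ p) with Nat.Coprime m y,
          2 * (N / y) * ((m.divisors.card : ℝ) ^ p / m) := by
        refine Finset.sum_le_sum fun m hm => ?_
        obtain ⟨hm, coprime⟩ := Finset.mem_filter.1 hm
        obtain ⟨hm1, hmD⟩ := Finset.mem_Icc.1 hm
        rw [Finset.sum_const, nsmul_eq_mul, mul_div_left_comm, mul_comm]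
        gcongr
        exact cast_card_residueWindow_filter_dvd_le b hm1 coprime
          (le_trans (by exact_mod_cast hmD) hD)
    _ ≤ ∑ m ∈ Finset.Icc 1 (D ^ p), 2 * (N / y) * ((m.divisors.card : ℝ) ^ p / m) :=
        Finset.sum_le_sum_of_subset_of_nonneg (Finset.filter_subset _ _)
          fun _ _ _ => by positivity
    _ = 2 * (N / y) * ∑ m ∈ Finset.Icc 1 (D ^ p), (m.divisors.card : ℝ) ^ p / m := by
        rw [Finset.mul_sum]

lemma sum_inv_Icc_le_rpow {ε : ℝ} (hε : 0 < ε) {X : ℕ} (hX : 1 ≤ X) :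
    ∑ m ∈ Finset.Icc 1 X, 1 / (m : ℝ) ≤ (1 + 1 / ε) * (X : ℝ) ^ ε := by
  have harmonic_le := harmonic_le_one_add_log X
  rw [harmonic_eq_sum_Icc] at harmonic_le
  push_cast at harmonic_le
  simp only [one_div]
  calc ∑ m ∈ Finset.Icc 1 X, (m : ℝ)⁻¹ ≤ 1 + Real.log X := harmonic_le
    _ ≤ (X : ℝ) ^ ε + (X : ℝ) ^ ε / ε := add_le_add
        (Real.one_le_rpow (by exact_mod_cast hX) hε.le) (Real.log_le_rpow_div X.cast_nonneg hε)
    _ = (1 + ε⁻¹) * (X : ℝ) ^ ε := by ring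

lemma exists_card_divisors_pow_le_rpow (p : ℕ) {ε : ℝ} (hε : 0 < ε) :
    ∃ C : ℝ, 1 ≤ C ∧ ∀ n : ℕ, n ≠ 0 → (n.divisors.card : ℝ) ^ p ≤ C * (n : ℝ) ^ ε := by
  obtain ⟨C, hC, card_le⟩ := exists_card_divisors_le_rpow (ε := ε / (p + 1)) (by positivity)
  refine ⟨C ^ p, one_le_pow₀ hC, fun n hn => ?_⟩
  have hn1 : (1 : ℝ) ≤ n := by exact_mod_cast Nat.one_le_iff_ne_zero.2 hn
  calc (n.divisors.card : ℝ) ^ p ≤ (C * (n : ℝ) ^ (ε / (p + 1))) ^ p := by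
        gcongr
        exact card_le n hn
    _ = C ^ p * (n : ℝ) ^ (ε / (p + 1) * p) := by
        rw [mul_pow, Real.rpow_mul_natCast n.cast_nonneg]
    _ ≤ C ^ p * (n : ℝ) ^ ε := by
        gcongr
        rw [div_mul_eq_mul_div, div_le_iff₀ (by positivity)]
        gcongr
        linarith

lemma exists_sum_card_divisors_pow_div_le (p : ℕ) {ε : ℝ} (hε : 0 < ε) :
    ∃ C : ℝ, 1 ≤ C ∧ ∀ X : ℕ, 1 ≤ X →
      ∑ m ∈ Finset.Icc 1 X, (m.divisors.card : ℝ) ^ p / m ≤ C * (X : ℝ) ^ ε := by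
  obtain ⟨C, hC, card_pow_le⟩ := exists_card_divisors_pow_le_rpow p (half_pos hε)
  refine ⟨C * (1 + 1 / (ε / 2)), ?_, fun X hX => ?_⟩
  · exact one_le_mul_of_one_le_of_one_le hC (le_add_of_nonneg_right (by positivity))
  calc ∑ m ∈ Finset.Icc 1 X, (m.divisors.card : ℝ) ^ p / m
      ≤ ∑ m ∈ Finset.Icc 1 X, C * (X : ℝ) ^ (ε / 2) * (1 / (m : ℝ)) := by
        refine Finset.sum_le_sum fun m hm => ?_
        obtain ⟨hm1, hmX⟩ := Finset.mem_Icc.1 hm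
        rw [mul_one_div]
        gcongr
        refine (card_pow_le m (Nat.one_le_iff_ne_zero.1 hm1)).trans ?_
        gcongr
    _ ≤ C * (X : ℝ) ^ (ε / 2) * ((1 + 1 / (ε / 2)) * (X : ℝ) ^ (ε / 2)) := by
        rw [← Finset.mul_sum]
        gcongr
        exact sum_inv_Icc_le_rpow (half_pos hε) hX
    _ = C * (1 + 1 / (ε / 2)) * (X : ℝ) ^ ε := by
        rw [mul_mul_mul_comm, mul_comm (X ^ _ : ℝ), mul_assoc, mul_assoc,
          ← Real.rpow_add (by positivity), add_halves]

theorem exists_sum_abs_sum_ramanujanSum_pow_le {p : ℕ} (hp : p ≠ 0) {ε : ℝ} (hε : 0 < ε) :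
    ∃ C : ℝ, 1 ≤ C ∧ ∀ (N y D : ℕ) (b : ℤ) (𝓠 : Finset ℕ) (v : ℕ → ℝ) (V : ℝ), 1 ≤ D →
      (D : ℝ) ^ p ≤ N / y → 𝓠 ⊆ sieveModuli y D → 0 ≤ V → (∀ q ∈ 𝓠, |v q| ≤ V) →
      ∑ n ∈ residueWindow N y b, |∑ q ∈ 𝓠, v q * ramanujanSum n q| ^ p ≤
        (C * V * (D : ℝ) ^ (1 + ε) * ((N : ℝ) / y) ^ (1 / (p : ℝ))) ^ p := by
  obtain ⟨C, hC, divisor_sum_le⟩ := exists_sum_card_divisors_pow_div_le p hε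
  refine ⟨2 * C, by linarith, fun N y D b 𝓠 v V hD hDp h𝓠 hV hv => ?_⟩
  have hD0 : (0 : ℝ) < D := by exact_mod_cast hD
  have root_pow : (((N : ℝ) / y) ^ (1 / (p : ℝ))) ^ p = N / y := by
    rw [one_div, Real.rpow_inv_natCast_pow (by positivity) hp]
  have rpow_comm : ((D ^ p : ℕ) : ℝ) ^ ε = ((D : ℝ) ^ ε) ^ p := by
    rw [Nat.cast_pow, ← Real.rpow_pow_comm hD0.le]
  calc ∑ n ∈ residueWindow N y b, |∑ q ∈ 𝓠, v q * ramanujanSum n q| ^ p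
      ≤ ∑ n ∈ residueWindow N y b, (V * D) ^ p * ((smallDivisors D y n).card : ℝ) ^ p := by
        refine Finset.sum_le_sum fun n _ => ?_
        rw [← mul_pow]
        gcongr
        exact abs_sum_ramanujanSum_le h𝓠 v hV hv n
    _ ≤ (V * D) ^ p * (2 * (N / y) * (C * ((D ^ p : ℕ) : ℝ) ^ ε)) := by
        rw [← Finset.mul_sum]
        gcongr
        refine (sum_card_smallDivisors_pow_le b hDp).trans ?_
        gcongr
        exact divisor_sum_le _ (Nat.one_le_pow _ _ hD)
    _ = (2 * C) * ((V * D) ^ p * ((D : ℝ) ^ ε) ^ p * (N / y)) := by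
        rw [rpow_comm]
        ring
    _ ≤ (2 * C) ^ p * ((V * D) ^ p * ((D : ℝ) ^ ε) ^ p * (N / y)) := by
        gcongr
        exact le_self_pow₀ (by linarith) hp
    _ = (2 * C * V * (D : ℝ) ^ (1 + ε) * ((N : ℝ) / y) ^ (1 / (p : ℝ))) ^ p := by
        rw [Real.rpow_add hD0, Real.rpow_one]
        simp only [mul_pow, root_pow]
        ring

end RamanujanMoments

section Interpolation

lemma exists_interpolation_exponents {r : ℝ} (hr1 : 1 < r) (hr2 : r < 2) :
    ∃ (p : ℕ) (t : ℝ), p ≠ 0 ∧ 0 < t ∧ t < 1 ∧ (1 - t) / p + t = 2 - 2 / r := by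
  have hθ0 : 0 < 2 - 2 / r := by rw [sub_pos, div_lt_iff₀] <;> linarith
  have hθ1 : 2 - 2 / r < 1 := by
    have : 1 < 2 / r := (one_lt_div (by linarith)).2 hr2
    linarith
  generalize 2 - 2 / r = θ at hθ0 hθ1 ⊢
  obtain ⟨p, hp⟩ := exists_nat_one_div_lt hθ0
  have hp1 : 0 < 1 - 1 / ((p : ℝ) + 1) := by linarith
  refine ⟨p + 1, (θ - 1 / (p + 1)) / (1 - 1 / (p + 1)), p.succ_ne_zero,
    div_pos (by linarith) hp1, (div_lt_one hp1).2 (by linarith), ?_⟩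
  rw [div_eq_mul_one_div (1 - _), Nat.cast_succ]
  generalize 1 / ((p : ℝ) + 1) = x at *
  field_simp
  ring

lemma one_le_and_le_of_one_le_div {N y : ℕ} (h : 1 ≤ (N : ℝ) / y) : 1 ≤ y ∧ y ≤ N := by
  have hy : y ≠ 0 := by
    rintro rfl
    norm_num at h
  have hy0 : (0 : ℝ) < y := by exact_mod_cast hy.bot_lt
  exact ⟨hy.bot_lt, by exact_mod_cast (one_le_div hy0).1 h⟩

lemma rpow_interpolation_eq {C V D M a e t : ℝ} (hC : 0 < C) (hV : 0 < V) (hD : 0 < D)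
    (hM : 0 < M) :
    (C * V * D ^ a * M ^ e) ^ (1 - t) * (6 * V * M) ^ t =
      C ^ (1 - t) * 6 ^ t * V * D ^ (a * (1 - t)) * M ^ ((1 - t) * e + t) := by
  have hVt : V ^ (1 - t) * V ^ t = V := by rw [← Real.rpow_add hV, sub_add_cancel, Real.rpow_one]
  rw [Real.mul_rpow (by positivity) (by positivity), Real.mul_rpow (by positivity) (by positivity),
    Real.mul_rpow (by positivity) (by positivity), Real.mul_rpow (by positivity) (by positivity),
    Real.mul_rpow (by positivity) (by positivity), ← Real.rpow_mul hD.le, ← Real.rpow_mul hM.le,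
    Real.rpow_add hM, mul_comm e]
  linear_combination C ^ (1 - t) * 6 ^ t * D ^ (a * (1 - t)) * M ^ ((1 - t) * e) * M ^ t * hVt

theorem exists_convolutionBound_sum_ramanujanSum {p : ℕ} {r t ε : ℝ} (hp : p ≠ 0) (hr : 0 < r)
    (ht0 : 0 ≤ t) (ht1 : t ≤ 1) (hrt : (1 - t) / p + t = 2 - 2 / r) (hε : 0 < ε) :
    ∃ C : ℝ, 0 < C ∧ ∀ (N y D : ℕ) (b : ℤ) (𝓠 : Finset ℕ) (v : ℕ → ℝ) (V : ℝ), 1 ≤ D →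
      (D : ℝ) ^ (p + 4) ≤ N / y → 𝓠 ⊆ sieveModuli y D → 0 < V → (∀ q ∈ 𝓠, |v q| ≤ V) →
      ConvolutionBound
        (finsetKernel (residueWindow N y b) fun n => ∑ q ∈ 𝓠, v q * ramanujanSum n q) r
        (C * V * D ^ ((1 + ε) * (1 - t)) * ((N : ℝ) / y) ^ (2 - 2 / r)) := by
  obtain ⟨C, hC, hmoment⟩ := exists_sum_abs_sum_ramanujanSum_pow_le hp hε
  refine ⟨C ^ (1 - t) * 6 ^ t, by positivity, fun N y D b 𝓠 v V hD hDN h𝓠 hV hv => ?_⟩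
  have hD1 : (1 : ℝ) ≤ D := by exact_mod_cast hD
  have hpow {k : ℕ} (hk : k ≤ p + 4) : (D : ℝ) ^ k ≤ N / y :=
    (pow_le_pow_right₀ hD1 hk).trans hDN
  have hM : 1 ≤ (N : ℝ) / y := (one_le_pow₀ hD1).trans hDN
  obtain ⟨hy, hyN⟩ := one_le_and_le_of_one_le_div hM
  have hp1 : (1 : ℝ) ≤ p := by exact_mod_cast Nat.one_le_iff_ne_zero.2 hp
  have hs : 0 < 1 - 1 / (2 * (p : ℝ)) := by
    rw [sub_pos, div_lt_one (by positivity)]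
    linarith
  have moment : ConvolutionBound
      (finsetKernel (residueWindow N y b) fun n => ∑ q ∈ 𝓠, v q * ramanujanSum n q)
      (1 / (1 - 1 / (2 * (p : ℝ)))) (C * V * D ^ (1 + ε) * ((N : ℝ) / y) ^ (1 / (p : ℝ))) := by
    refine .finsetKernel_young hp1 (one_div_pos.2 hs) (one_div_one_div _) (by positivity) ?_
    simp_rw [Real.rpow_natCast]
    exact hmoment N y D b 𝓠 v V hD (hpow (by omega)) h𝓠 hV.le hv
  have fourier : ConvolutionBound
      (finsetKernel (residueWindow N y b) fun n => ∑ q ∈ 𝓠, v q * ramanujanSum n q)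
      2 (6 * V * ((N : ℝ) / y)) := by
    refine .finsetKernel_of_norm_sum_mul_pow_le fun u hu =>
      (norm_sum_ramanujanSum_mul_pow_le hy hyN b h𝓠 v hV.le hv hu).trans ?_
    nlinarith [hpow (k := 4) (by omega)]
  have hrs : 1 / r = (1 - t) / (1 / (1 - 1 / (2 * (p : ℝ)))) + t / 2 := by
    have : 1 / r = 1 - (2 - 2 / r) / 2 := by ring
    rw [this, ← hrt, div_div_eq_mul_div, div_one]
    ring
  have key := ConvolutionBound.interp (one_div_pos.2 hs) two_pos hr ht0 ht1 hrs moment fourier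
  rwa [rpow_interpolation_eq (by positivity) hV (by positivity) (by positivity), mul_one_div,
    hrt] at key

lemma rpow_le_two_mul_rpow {D q e : ℝ} (hD : 0 < D) (hq : D ≤ 2 * q) (he0 : e ≤ 0)
    (he1 : -1 ≤ e) : q ^ e ≤ 2 * D ^ e := by
  have h2 : (2 : ℝ) ^ (-e) ≤ 2 :=
    Real.rpow_le_self_of_one_le one_le_two (by linarith)
  calc q ^ e ≤ (D / 2) ^ e := Real.rpow_le_rpow_of_nonpos (by positivity) (by linarith) he0
    _ = 2 ^ (-e) * D ^ e := by
        rw [Real.div_rpow hD.le zero_le_two, Real.rpow_neg zero_le_two]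
        field_simp
    _ ≤ 2 * D ^ e := by gcongr

theorem exists_convolutionBound_selberg_block {p : ℕ} {r t : ℝ} (hp : p ≠ 0) (hr : 0 < r)
    (ht0 : 0 < t) (ht1 : t ≤ 1) (hrt : (1 - t) / p + t = 2 - 2 / r) :
    ∃ C : ℝ, 0 < C ∧ ∀ (N y R D : ℕ) (b : ℤ) (𝓠 : Finset ℕ), 1 ≤ R → 1 ≤ D →
      (D : ℝ) ^ (p + 4) ≤ N / y → 𝓠 ⊆ sieveModuli y D → (∀ q ∈ 𝓠, D ≤ 2 * q) →
      ConvolutionBound (finsetKernel (residueWindow N y b)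
        fun n => ∑ q ∈ 𝓠, sieveCoeff y R q * ramanujanSum n q) r
        (C * (D : ℝ) ^ (-(t / 2)) * ((N : ℝ) / y) ^ (2 - 2 / r)) := by
  have hε : 0 < t / 4 := by positivity
  obtain ⟨C₁, hC₁, hcoeff⟩ := exists_abs_sieveCoeff_le hε
  obtain ⟨C₂, hC₂, hbound⟩ :=
    exists_convolutionBound_sum_ramanujanSum hp hr ht0.le ht1 hrt hε
  refine ⟨C₂ * (2 * C₁), by positivity, fun N y R D b 𝓠 hR hD hDN h𝓠 hDq => ?_⟩
  have hD1 : (1 : ℝ) ≤ D := by exact_mod_cast hD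
  have hD0 : (0 : ℝ) < D := by linarith
  have hv : ∀ q ∈ 𝓠, |sieveCoeff y R q| ≤ 2 * C₁ * (D : ℝ) ^ (t / 4 - 1) := fun q hq =>
    calc |sieveCoeff y R q| ≤ C₁ * (q : ℝ) ^ (t / 4 - 1) :=
          hcoeff y R q hR (mem_sieveModuli.1 (h𝓠 hq)).2.1
      _ ≤ C₁ * (2 * (D : ℝ) ^ (t / 4 - 1)) := by
          gcongr
          exact rpow_le_two_mul_rpow hD0 (by exact_mod_cast hDq q hq) (by linarith) (by linarith)
      _ = 2 * C₁ * (D : ℝ) ^ (t / 4 - 1) := by ring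
  refine (hbound N y D b 𝓠 _ _ hD hDN h𝓠 (by positivity) hv).mono_right ?_
  gcongr ?_ * _
  calc C₂ * (2 * C₁ * (D : ℝ) ^ (t / 4 - 1)) * (D : ℝ) ^ ((1 + t / 4) * (1 - t))
      = C₂ * (2 * C₁) * (D : ℝ) ^ (t / 4 - 1 + (1 + t / 4) * (1 - t)) := by
        rw [Real.rpow_add hD0]
        ring
    _ ≤ C₂ * (2 * C₁) * (D : ℝ) ^ (-(t / 2)) := by
        gcongr
        nlinarith

lemma filter_log_eq_subset_sieveModuli (y R j : ℕ) :
    (sieveModuli y R).filter (Nat.log 2 · = j) ⊆ sieveModuli y (2 ^ (j + 1)) := by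
  intro q hq
  obtain ⟨hq, hlog⟩ := Finset.mem_filter.1 hq
  obtain ⟨⟨hq1, -⟩, hqy⟩ := mem_sieveModuli.1 hq
  exact mem_sieveModuli.2
    ⟨⟨hq1, (Nat.lt_pow_of_log_lt one_lt_two (by omega)).le⟩, hqy⟩

lemma selbergMajorant_eq_sum_dyadic (y R : ℕ) :
    selbergMajorant y R = ∑ j ∈ Finset.range (Nat.log 2 (R ^ 2) + 1), fun n =>
      ∑ q ∈ (sieveModuli y (R ^ 2)).filter (Nat.log 2 · = j),
        sieveCoeff y R q * ramanujanSum n q := by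
  ext n
  rw [Finset.sum_apply, selbergMajorant_eq_sum_ramanujanSum, Finset.sum_fiberwise_of_maps_to]
  exact fun q hq => Finset.mem_range_succ_iff.2 (Nat.log_mono_right (mem_sieveModuli.1 hq).1.2)

theorem exists_convolutionBound_selbergMajorant {p : ℕ} {r t : ℝ} (hp : p ≠ 0) (hr : 0 < r)
    (ht0 : 0 < t) (ht1 : t ≤ 1) (hrt : (1 - t) / p + t = 2 - 2 / r) :
    ∃ C : ℝ, 0 < C ∧ ∀ (N y R : ℕ) (b : ℤ), 1 ≤ R → (2 * (R : ℝ) ^ 2) ^ (p + 4) ≤ N / y →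
      ConvolutionBound (finsetKernel (residueWindow N y b) (selbergMajorant y R)) r
        (C * ((N : ℝ) / y) ^ (2 - 2 / r)) := by
  obtain ⟨C, hC, hblock⟩ := exists_convolutionBound_selberg_block hp hr ht0 ht1 hrt
  set ρ : ℝ := 2 ^ (-(t / 2)) with hρ
  have hρ0 : 0 < ρ := by positivity
  have hρ1 : ρ < 1 := Real.rpow_lt_one_of_one_lt_of_neg one_lt_two (by linarith)
  refine ⟨C * (1 - ρ)⁻¹, mul_pos hC (inv_pos.2 (sub_pos.2 hρ1)), fun N y R b hR hRN => ?_⟩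
  rw [selbergMajorant_eq_sum_dyadic, map_sum]
  refine (ConvolutionBound.sum (A := fun j => C * ρ ^ j * ((N : ℝ) / y) ^ (2 - 2 / r)) _
    fun j hj => ?_).mono_right ?_
  · have hjR : 2 ^ j ≤ R ^ 2 :=
      Nat.pow_le_of_le_log (by positivity) (Finset.mem_range_succ_iff.1 hj)
    have hDR : ((2 ^ (j + 1) : ℕ) : ℝ) ≤ 2 * (R : ℝ) ^ 2 := by
      exact_mod_cast (pow_succ' 2 j).trans_le (Nat.mul_le_mul_left 2 hjR)
    refine (hblock N y R (2 ^ (j + 1)) b _ hR Nat.one_le_two_pow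
      ((pow_le_pow_left₀ (by positivity) hDR _).trans hRN)
      (filter_log_eq_subset_sieveModuli y (R ^ 2) j) fun q hq => ?_).mono_right ?_
    · obtain ⟨hqR, rfl⟩ := Finset.mem_filter.1 hq
      rw [pow_succ']
      gcongr
      exact Nat.pow_log_le_self 2 (Nat.one_le_iff_ne_zero.1 (mem_sieveModuli.1 hqR).1.1)
    · gcongr
      push_cast
      rw [← Real.rpow_natCast, ← Real.rpow_mul two_pos.le, mul_comm, Real.rpow_mul two_pos.le,
        ← hρ, Real.rpow_natCast]
      exact pow_le_pow_of_le_one hρ0.le hρ1.le j.le_succ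
  · rw [← Finset.sum_mul, ← Finset.mul_sum, ← tsum_geometric_of_lt_one hρ0.le hρ1]
    gcongr
    exact (summable_geometric_of_lt_one hρ0.le hρ1).sum_le_tsum _ fun _ _ => by positivity

end Interpolation

section SievedPrimePowers

variable {N y R : ℕ} {b : ℤ}

open Classical in
/-- The prime powers of the progression which share a factor with some sieve modulus: the support
of the von Mangoldt function outside of the set where the sieve weight is maximal. -/
def sievedPrimePowers (N y R : ℕ) (b : ℤ) : Finset ℕ :=
  (residueWindow N y b).filter fun n => IsPrimePow n ∧ ¬ ∀ m ∈ sieveModuli y R, Nat.Coprime m n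

lemma mem_sievedPrimePowers {n : ℕ} : n ∈ sievedPrimePowers N y R b ↔
    n ∈ residueWindow N y b ∧ IsPrimePow n ∧ ¬ ∀ m ∈ sieveModuli y R, Nat.Coprime m n :=
  Finset.mem_filter

lemma sievedPrimePowers_subset (N y R : ℕ) (b : ℤ) :
    sievedPrimePowers N y R b ⊆ residueWindow N y b :=
  Finset.filter_subset _ _

lemma card_sievedPrimePowers_le (N y R : ℕ) (b : ℤ) :
    (sievedPrimePowers N y R b).card ≤ R * (Nat.log 2 N + 1) := by
  classical
  have hsub : sievedPrimePowers N y R b ⊆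
      (Finset.Icc 1 R ×ˢ Finset.range (Nat.log 2 N + 1)).image fun x => x.1 ^ x.2 := by
    intro n hn
    obtain ⟨hnW, hpp, hnc⟩ := mem_sievedPrimePowers.1 hn
    obtain ⟨ℓ, k, hℓ, -, rfl⟩ := (isPrimePow_nat_iff n).1 hpp
    push Not at hnc
    obtain ⟨m, hm, hmn⟩ := hnc
    obtain ⟨hm1, hmR⟩ := (mem_sieveModuli.1 hm).1
    have hdvd : ℓ ∣ m := by
      by_contra hd
      exact hmn ((hℓ.coprime_iff_not_dvd.2 hd).symm.pow_right k)
    refine Finset.mem_image.2 ⟨(ℓ, k), Finset.mem_product.2 ⟨Finset.mem_Icc.2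
      ⟨hℓ.one_le, (Nat.le_of_dvd hm1 hdvd).trans hmR⟩, Finset.mem_range_succ_iff.2 ?_⟩, rfl⟩
    exact Nat.le_log_of_pow_le one_lt_two
      ((Nat.pow_le_pow_left hℓ.two_le k).trans (lt_of_mem_residueWindow hnW).le)
  refine (Finset.card_le_card hsub).trans (Finset.card_image_le.trans_eq ?_)
  rw [Finset.card_product, Nat.card_Icc, Finset.card_range, Nat.add_sub_cancel]

lemma natLog_two_add_one_mul_log_rpow_le {p : ℝ} (hp : 0 ≤ p) (hN : 1 ≤ N) :
    ((Nat.log 2 N + 1 : ℕ) : ℝ) * Real.log N ^ p ≤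
      (4 * p + 5) ^ (p + 1) * (N : ℝ) ^ (1 / 2 : ℝ) := by
  have hN1 : (1 : ℝ) ≤ N := by exact_mod_cast hN
  have hN0 : (0 : ℝ) < N := by linarith
  set ε : ℝ := 1 / (2 * (p + 1)) with hε
  have hε0 : 0 < ε := by positivity
  have one_le : 1 ≤ (N : ℝ) ^ ε := Real.one_le_rpow hN1 hε0.le
  have hlog0 : 0 ≤ Real.log N := Real.log_nonneg hN1
  have hlog : Real.log N ≤ 2 * (p + 1) * (N : ℝ) ^ ε := by
    refine (Real.log_le_rpow_div hN0.le hε0).trans_eq ?_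
    rw [hε]
    field_simp
  have hlog' : Real.log N ≤ (4 * p + 5) * (N : ℝ) ^ ε := hlog.trans (by gcongr; linarith)
  have hnatLog : (Nat.log 2 N : ℝ) ≤ 2 * Real.log N := by
    refine (Real.natLog_le_logb N 2).trans ?_
    rw [Real.logb, Nat.cast_two, div_le_iff₀ (Real.log_pos one_lt_two)]
    nlinarith [Real.log_two_gt_d9]
  have hcount : ((Nat.log 2 N + 1 : ℕ) : ℝ) ≤ (4 * p + 5) * (N : ℝ) ^ ε := by
    push_cast
    linarith
  calc ((Nat.log 2 N + 1 : ℕ) : ℝ) * Real.log N ^ p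
      ≤ ((4 * p + 5) * (N : ℝ) ^ ε) * ((4 * p + 5) * (N : ℝ) ^ ε) ^ p := by gcongr
    _ = ((4 * p + 5) * (N : ℝ) ^ ε) ^ (p + 1) := by
        rw [Real.rpow_add_one (by positivity), mul_comm]
    _ = (4 * p + 5) ^ (p + 1) * (N : ℝ) ^ (1 / 2 : ℝ) := by
        rw [Real.mul_rpow (by positivity) (by positivity), ← Real.rpow_mul hN0.le, hε]
        field_simp

lemma primeWeight_le_div_mul_log {n : ℕ} (hn : n ≠ 0) (hnN : n ≤ N) :
    primeWeight N y n ≤ (y : ℝ) / N * Real.log N := by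
  have : (0 : ℝ) < n := by exact_mod_cast hn.bot_lt
  have hΛ : ArithmeticFunction.vonMangoldt n ≤ Real.log N :=
    ArithmeticFunction.vonMangoldt_le_log.trans (by gcongr)
  rw [primeWeight]
  gcongr
  exact Nat.totient_le y

lemma sum_primeWeight_rpow_sievedPrimePowers_le {p : ℝ} (hp : 0 ≤ p) (b : ℤ) (hN : 1 ≤ N) :
    ∑ n ∈ sievedPrimePowers N y R b, |primeWeight N y n| ^ p ≤
      (4 * p + 5) ^ (p + 1) * (R * (N : ℝ) ^ (1 / 2 : ℝ)) * ((y : ℝ) / N) ^ p := by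
  have hlog : 0 ≤ Real.log N := Real.log_nonneg (by exact_mod_cast hN)
  calc ∑ n ∈ sievedPrimePowers N y R b, |primeWeight N y n| ^ p
      ≤ ∑ _n ∈ sievedPrimePowers N y R b, ((y : ℝ) / N * Real.log N) ^ p := by
        refine Finset.sum_le_sum fun n hn => ?_
        obtain ⟨hnW, hpp, -⟩ := mem_sievedPrimePowers.1 hn
        rw [abs_of_nonneg (primeWeight_nonneg N y n)]
        have := primeWeight_nonneg N y n
        gcongr
        exact primeWeight_le_div_mul_log hpp.ne_zero (lt_of_mem_residueWindow hnW).le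
    _ = ((sievedPrimePowers N y R b).card : ℝ) * ((y : ℝ) / N * Real.log N) ^ p := by
        rw [Finset.sum_const, nsmul_eq_mul]
    _ ≤ ((R * (Nat.log 2 N + 1) : ℕ) : ℝ) * ((y : ℝ) / N * Real.log N) ^ p := by
        gcongr
        exact card_sievedPrimePowers_le N y R b
    _ = R * (((Nat.log 2 N + 1 : ℕ) : ℝ) * Real.log N ^ p) * ((y : ℝ) / N) ^ p := by
        rw [Real.mul_rpow (by positivity) hlog, Nat.cast_mul]
        ring
    _ ≤ R * ((4 * p + 5) ^ (p + 1) * (N : ℝ) ^ (1 / 2 : ℝ)) * ((y : ℝ) / N) ^ p := by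
        gcongr ?_ * ?_
        gcongr ?_ * ?_
        exact natLog_two_add_one_mul_log_rpow_le hp hN
    _ = _ := by ring

lemma mul_rpow_half_le_div (hy : 1 ≤ y) (hyR : y ≤ R) (hRN : R ^ 4 ≤ N) :
    (R : ℝ) * (N : ℝ) ^ (1 / 2 : ℝ) ≤ N / y := by
  rw [← Real.sqrt_eq_rpow, le_div_iff₀ (by exact_mod_cast hy)]
  have hR2 : (R : ℝ) ^ 2 ≤ √N := Real.le_sqrt_of_sq_le (by rw [← pow_mul]; exact_mod_cast hRN)
  calc R * √N * y ≤ R * √N * R := by gcongr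
    _ = R ^ 2 * √N := by ring
    _ ≤ √N * √N := by gcongr
    _ = N := Real.mul_self_sqrt N.cast_nonneg

lemma convolutionBound_sievedPrimePowers {p r : ℝ} (hp : 1 ≤ p) (hr : 0 < r)
    (hpr : 1 / r = 1 - 1 / (2 * p)) (b : ℤ) (hy : 1 ≤ y) (hyR : y ≤ R) (hRN : R ^ 4 ≤ N) :
    ConvolutionBound (finsetKernel (sievedPrimePowers N y R b) (primeWeight N y)) r
      ((4 * p + 5) ^ (p + 1) * ((y : ℝ) / N) ^ (1 - 1 / p)) := by
  have hN : 1 ≤ N := (Nat.one_le_pow _ _ (hy.trans hyR)).trans hRN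
  have : (0 : ℝ) < y := by exact_mod_cast hy
  have : (0 : ℝ) < N := by exact_mod_cast hN
  have hK : 1 ≤ (4 * p + 5) ^ (p + 1) := Real.one_le_rpow (by linarith) (by linarith)
  refine .finsetKernel_young hp hr hpr (by positivity)
    ((sum_primeWeight_rpow_sievedPrimePowers_le (by linarith) b hN).trans ?_)
  calc (4 * p + 5) ^ (p + 1) * (R * (N : ℝ) ^ (1 / 2 : ℝ)) * ((y : ℝ) / N) ^ p
      ≤ ((4 * p + 5) ^ (p + 1)) ^ p * (N / y) * ((y : ℝ) / N) ^ p := by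
        gcongr
        · exact Real.self_le_rpow_of_one_le hK hp
        · exact mul_rpow_half_le_div hy hyR hRN
    _ = ((4 * p + 5) ^ (p + 1)) ^ p * ((y : ℝ) / N) ^ ((1 - 1 / p) * p) := by
        have : (1 - 1 / p) * p = p - 1 := by field_simp
        rw [this, Real.rpow_sub_one (by positivity)]
        field_simp
    _ = ((4 * p + 5) ^ (p + 1) * ((y : ℝ) / N) ^ (1 - 1 / p)) ^ p := by
        rw [Real.rpow_mul (by positivity), ← Real.mul_rpow (by positivity) (by positivity)]

theorem exists_convolutionBound_sievedPrimePowers {r : ℝ} (hr1 : 1 < r) (hr2 : r ≤ 2) :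
    ∃ C : ℝ, 0 < C ∧ ∀ (N y R : ℕ) (b : ℤ), 1 ≤ y → y ≤ R → R ^ 4 ≤ N →
      ConvolutionBound (finsetKernel (sievedPrimePowers N y R b) (primeWeight N y)) r
        (C * ((y : ℝ) / N) ^ (1 / r - 1 / (r / (r - 1)))) := by
  have hr0 : 0 < r := by linarith
  have hr1' : 0 < r - 1 := by linarith
  set p : ℝ := r / (r - 1) / 2 with hp
  have one_le : 1 ≤ p := by
    rw [hp, le_div_iff₀ two_pos, le_div_iff₀ hr1']
    linarith
  have young_exponent : 1 / r = 1 - 1 / (2 * p) := by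
    rw [hp]
    field_simp
    ring
  have gain : 1 / r - 1 / (r / (r - 1)) = 1 - 1 / p := by
    rw [hp]
    field_simp
    ring
  rw [gain]
  exact ⟨_, by positivity, fun N y R b => convolutionBound_sievedPrimePowers one_le hr0
    young_exponent b⟩

lemma primeWeight_le_mul_sieveMass {κ n : ℕ} (hy : y ≠ 0) (hyR : y ^ 2 ≤ R)
    (hN : N < (R + 1) ^ κ) (hn : n ≠ 0) (hnN : n < N) :
    primeWeight N y n ≤ 4 * κ * (y / N) * sieveMass y R := by
  have : (0 : ℝ) < y := by exact_mod_cast hy.bot_lt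
  have hn0 : (0 : ℝ) < n := by exact_mod_cast hn.bot_lt
  have hΛ : ArithmeticFunction.vonMangoldt n ≤ κ * Real.log (R + 1) :=
    calc ArithmeticFunction.vonMangoldt n ≤ Real.log n := ArithmeticFunction.vonMangoldt_le_log
      _ ≤ Real.log (((R : ℝ) + 1) ^ κ) :=
          Real.log_le_log hn0 (by exact_mod_cast (hnN.trans hN).le)
      _ = κ * Real.log (R + 1) := Real.log_pow _ _
  calc primeWeight N y n ≤ (Nat.totient y : ℝ) / N * (κ * Real.log (R + 1)) := by
        rw [primeWeight]
        gcongr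
    _ = κ * (y / N) * ((Nat.totient y : ℝ) / y * Real.log (R + 1)) := by field_simp
    _ ≤ κ * (y / N) * (4 * sieveMass y R) := by
        gcongr ?_ * ?_
        exact totient_mul_log_le_sieveMass hy hyR
    _ = 4 * κ * (y / N) * sieveMass y R := by ring

lemma primeWeight_le_indicator_add {κ : ℕ} (hy : y ≠ 0) (hyR : y ^ 2 ≤ R)
    (hN : N < (R + 1) ^ κ) {n : ℕ} (hn : n ∈ residueWindow N y b) :
    primeWeight N y n ≤ (Set.indicator (sievedPrimePowers N y R b) (primeWeight N y) +
      (4 * κ * (y / N) : ℝ) • selbergMajorant y R) n := by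
  have majorant_nonneg : 0 ≤ 4 * κ * (y / N : ℝ) * selbergMajorant y R n :=
    mul_nonneg (by positivity) (selbergMajorant_nonneg y R n)
  rw [Pi.add_apply, Pi.smul_apply, smul_eq_mul]
  by_cases hS : n ∈ sievedPrimePowers N y R b
  · rw [Set.indicator_of_mem (Finset.mem_coe.2 hS)]
    linarith
  rw [Set.indicator_of_notMem (by exact_mod_cast hS), zero_add]
  by_cases hpp : IsPrimePow n
  · have hcop : ∀ m ∈ sieveModuli y R, Nat.Coprime m n := by
      by_contra h
      exact hS (mem_sievedPrimePowers.2 ⟨hn, hpp, h⟩)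
    rw [selbergMajorant_of_coprime hcop]
    exact primeWeight_le_mul_sieveMass hy hyR hN hpp.ne_zero (lt_of_mem_residueWindow hn)
  · rwa [primeWeight, ArithmeticFunction.vonMangoldt_eq_zero_iff.2 hpp, mul_zero]

end SievedPrimePowers

section Improving

variable {N y : ℕ}

lemma exists_sieve_level (k : ℕ) (hy : 1 ≤ y)
    (hN : (2 * y) ^ (2 * (3 * k + 1)) < N) : ∃ R : ℕ, 1 ≤ R ∧ y ^ 2 ≤ R ∧ R ^ (3 * k + 1) ≤ N ∧
      N < (R + 1) ^ (3 * k + 1) ∧ (2 * (R : ℝ) ^ 2) ^ k ≤ N / y := by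
  set κ := 3 * k + 1
  have hκ : κ ≠ 0 := Nat.succ_ne_zero _
  have hRN : Nat.nthRoot κ N ^ κ ≤ N := Nat.pow_nthRoot_le (Or.inl hκ)
  have hNR : N < (Nat.nthRoot κ N + 1) ^ κ := Nat.lt_pow_nthRoot_add_one hκ N
  generalize Nat.nthRoot κ N = R at hRN hNR
  rw [pow_mul] at hN
  have hyR : (2 * y) ^ 2 ≤ R :=
    Nat.lt_succ_iff.1 (lt_of_pow_lt_pow_left₀ κ R.succ.zero_le (hN.trans hNR))
  have hR2 : 2 ≤ R := by nlinarith
  refine ⟨R, by omega, by nlinarith, hRN, hNR, ?_⟩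
  rw [le_div_iff₀ (by exact_mod_cast hy)]
  have : (2 * R ^ 2) ^ k * y ≤ N :=
    calc (2 * R ^ 2) ^ k * y ≤ (R * R ^ 2) ^ k * R := by
          gcongr
          nlinarith
      _ = R ^ κ := by ring
      _ ≤ N := hRN
  exact_mod_cast this

theorem exists_convolutionBound_primeWeight {r : ℝ} (hr1 : 1 < r) (hr2 : r < 2) :
    ∃ C : ℝ, 0 < C ∧ ∃ K : ℕ, ∀ y N : ℕ, 1 ≤ y → (2 * y) ^ K < N → ∀ b : ℤ,
      ConvolutionBound (finsetKernel (residueWindow N y b) (primeWeight N y)) r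
        (C * ((y : ℝ) / N) ^ (1 / r - 1 / (r / (r - 1)))) := by
  have hr0 : 0 < r := by linarith
  obtain ⟨p, t, hp, ht0, ht1, hrt⟩ := exists_interpolation_exponents hr1 hr2
  obtain ⟨C, hC, hsieve⟩ := exists_convolutionBound_selbergMajorant hp hr0 ht0 ht1.le hrt
  obtain ⟨C', hC', hsieved⟩ := exists_convolutionBound_sievedPrimePowers hr1 hr2.le
  set κ : ℕ := 3 * (p + 4) + 1
  refine ⟨C' + 4 * κ * C, by positivity, 2 * κ, fun y N hy hN b => ?_⟩
  obtain ⟨R, hR, hyR, hRN, hNR, hlevel⟩ := exists_sieve_level (p + 4) hy hN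
  have hy0 : (0 : ℝ) < y := by exact_mod_cast hy
  have hN0 : (0 : ℝ) < N := by exact_mod_cast (Nat.zero_le _).trans_lt hN
  have small := hsieved N y R b hy ((Nat.le_self_pow two_ne_zero y).trans hyR)
    ((Nat.pow_le_pow_right hR (by omega)).trans hRN)
  have large := (hsieve N y R b hR hlevel).const_smul (c := 4 * κ * (y / N)) (by positivity)
  have sum := small.add large
  rw [← finsetKernel_indicator (sievedPrimePowers_subset N y R b), ← map_smul, ← map_add] at sum
  refine (sum.finsetKernel_mono fun n hn => ?_).mono_right (le_of_eq ?_)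
  · rw [abs_of_nonneg (primeWeight_nonneg N y n)]
    exact primeWeight_le_indicator_add (by omega) hyR hNR hn
  · have scale : (y : ℝ) / N * ((N : ℝ) / y) ^ (2 - 2 / r) =
        ((y : ℝ) / N) ^ (1 / r - 1 / (r / (r - 1))) := by
      have : 1 / r - 1 / (r / (r - 1)) = 1 - (2 - 2 / r) := by
        field_simp
        ring
      rw [this, Real.rpow_sub (div_pos hy0 hN0), Real.rpow_one, ← inv_div (y : ℝ),
        Real.inv_rpow (by positivity), div_eq_mul_inv (_ / _)]
    linear_combination 4 * κ * C * scale

theorem improving_inequality_general {r : ℝ} (hr1 : 1 < r) (hr2 : r < 2) :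
    ∃ C : ℝ, 0 < C ∧ ∃ K : ℕ, ∀ y N : ℕ, 1 ≤ y → (2 * y) ^ K < N → ∀ (b : ℤ) (f : ℤ → ℝ),
      lpNorm (r / (r - 1)) (pavg N y b f) ≤
        ENNReal.ofReal (C * ((y : ℝ) / N) ^ (1 / r - 1 / (r / (r - 1)))) * lpNorm r f := by
  obtain ⟨C, hC, K, h⟩ := exists_convolutionBound_primeWeight hr1 hr2
  exact ⟨C, hC, K, fun y N hy hN b f => lpNorm_pavg_le hr1 (by positivity) (h y N hy hN b) f⟩

lemma exists_two_mul_pow_le_exp {δ : ℝ} (hδ : 0 < δ) (K : ℕ) :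
    ∃ c : ℝ, 0 < c ∧ ∀ y : ℕ, 1 ≤ y → (2 * (y : ℝ)) ^ K ≤ Real.exp (c * (y : ℝ) ^ δ) := by
  refine ⟨(K + 1) * (1 + 1 / δ), by positivity, fun y hy => ?_⟩
  have hy1 : (1 : ℝ) ≤ y := by exact_mod_cast hy
  have two_le : (2 : ℝ) ≤ Real.exp ((y : ℝ) ^ δ) := by
    linarith [Real.add_one_le_exp ((y : ℝ) ^ δ), Real.one_le_rpow hy1 hδ.le]
  have le_exp : (y : ℝ) ≤ Real.exp ((y : ℝ) ^ δ / δ) := by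
    rw [← Real.log_le_iff_le_exp (by linarith)]
    exact Real.log_le_rpow_div (by linarith) hδ
  calc (2 * (y : ℝ)) ^ K ≤ (2 * (y : ℝ)) ^ (K + 1) := pow_le_pow_right₀ (by linarith) K.le_succ
    _ ≤ (Real.exp ((y : ℝ) ^ δ) * Real.exp ((y : ℝ) ^ δ / δ)) ^ (K + 1) := by gcongr
    _ = Real.exp ((K + 1) * (1 + 1 / δ) * (y : ℝ) ^ δ) := by
        rw [← Real.exp_add, ← Real.exp_nat_mul]
        push_cast
        ring_nf

end Improving

theorem improving_inequality :
    ∀ r : ℝ, 1 < r → r < 2 →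
      ∃ C : ℝ, 0 < C ∧
        ∀ δ : ℝ, 0 < δ →
          ∃ Crδ : ℝ, 0 < Crδ ∧
            ∀ y : ℕ, 1 ≤ y →
              ∀ N : ℕ, Real.exp (Crδ * (y : ℝ) ^ δ) < (N : ℝ) →
                ∀ b : ℤ, Int.gcd b y = 1 →
                  ∀ f : ℤ → ℝ, (Function.support f).Finite →
                    lpNorm (r / (r - 1)) (pavg N y b f) ≤
                      ENNReal.ofReal
                          (C * ((y : ℝ) / (N : ℝ)) ^ (1 / r - 1 / (r / (r - 1)))) *
                        lpNorm r f := by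
  intro r hr1 hr2
  obtain ⟨C, hC, K, h⟩ := improving_inequality_general hr1 hr2
  refine ⟨C, hC, fun δ hδ => ?_⟩
  obtain ⟨c, hc, hexp⟩ := exists_two_mul_pow_le_exp hδ K
  exact ⟨c, hc, fun y hy N hN b _ f _ =>
    h y N hy (by exact_mod_cast (hexp y hy).trans_lt hN) b f⟩

end
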